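/- Let M : ℂ₊ → B(H) be a Herglotz operator with M(z₀)⁻¹ ∈ B(H) for some (and hence all) z₀ ∈ ℂ₊. Then there exist a family of bounded self-adjoint, weakly (Lebesgue) measurable operators {Ξ(λ)}_{λ∈ℝ} ⊂ B(H) satisfying 0 ≤ Ξ(λ) ≤ I_H for a.e. λ ∈ ℝ, and a bounded self-adjoint operator C = C* ∈ B(H), such that log(M(z)) = C + ∫_ℝ dλ Ξ(λ) ((λ − z)⁻¹ − λ(1 + λ²)⁻¹) for all z ∈ ℂ₊, the integral taken in the weak sense (i.e., the scalar identity holds for the quadratic forms (f, log(M(z)) g) for all f, g ∈ H). -/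

import Mathlib

open Complex Filter MeasureTheory TopologicalSpace ContinuousLinearMap
open scoped InnerProductSpace Topology

noncomputable section

namespace SpectralShift

variable {H : Type*} [NormedAddCommGroup H] [InnerProductSpace ℂ H] [CompleteSpace H]

/-- The imaginary part `(T - T*)/(2i)` of a bounded operator. -/
def imPart (T : H →L[ℂ] H) : H →L[ℂ] H :=
  ((2 * Complex.I)⁻¹ : ℂ) • (T - ContinuousLinearMap.adjoint T)

/-- An operator-valued Herglotz function: analytic on the open upper half-plane with
nonnegative imaginary part there. -/
def IsHerglotz (M : ℂ → H →L[ℂ] H) : Prop :=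
  DifferentiableOn ℂ M {z : ℂ | 0 < z.im} ∧ ∀ z : ℂ, 0 < z.im → (imPart (M z)).IsPositive

/-- The integrand `(T + iλ)⁻¹ - (1 + iλ)⁻¹ I` in the integral representation of `log T`. -/
def logIntegrand (T : H →L[ℂ] H) (t : ℝ) : H →L[ℂ] H :=
  Ring.inverse (T + ((t : ℂ) * Complex.I) • (1 : H →L[ℂ] H)) -
    (((1 : ℂ) + (t : ℂ) * Complex.I)⁻¹) • (1 : H →L[ℂ] H)

/-- `log T = -i ∫₀^∞ ((T + iλ)⁻¹ - (1 + iλ)⁻¹ I) dλ` as a norm-convergent improper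
Riemann integral, for a dissipative boundedly invertible `T`. -/
def opLog (T : H →L[ℂ] H) : H →L[ℂ] H :=
  limUnder atTop (fun R : ℝ => (-Complex.I) • ∫ t in (0:ℝ)..R, logIntegrand T t)

/-- The logarithm `log S = (log S*)*` of an operator `S` with `-S` dissipative. -/
def opLogAnti (T : H →L[ℂ] H) : H →L[ℂ] H :=
  ContinuousLinearMap.adjoint (opLog (ContinuousLinearMap.adjoint T))

/-- The logarithm of a Herglotz-type operator family on `ℂ ∖ ℝ`, using `log T` in the
upper half-plane and the convention `log S = (log S*)*` in the lower half-plane. -/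
def logHerg (Φ : ℂ → H →L[ℂ] H) (z : ℂ) : H →L[ℂ] H :=
  if 0 < z.im then opLog (Φ z) else opLogAnti (Φ z)

/-- The logarithm of an anti-Herglotz-type operator family on `ℂ ∖ ℝ` (nonpositive
imaginary part in the upper half-plane). -/
def logAntiHerg (Φ : ℂ → H →L[ℂ] H) (z : ℂ) : H →L[ℂ] H :=
  if 0 < z.im then opLogAnti (Φ z) else opLog (Φ z)

/-- Trace class: absolute summability of the diagonal in every Hilbert basis. -/
def IsTraceClass (T : H →L[ℂ] H) : Prop :=
  ∀ (w : Set H) (b : HilbertBasis w ℂ H), Summable fun i => ‖⟪(b i : H), T (b i)⟫_ℂ‖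

/-- The trace, computed in a fixed Hilbert basis (basis-independent for trace
class operators). -/
def trH (T : H →L[ℂ] H) : ℂ :=
  ∑' i, ⟪((exists_hilbertBasis ℂ H).choose_spec.choose i : H),
    T ((exists_hilbertBasis ℂ H).choose_spec.choose i)⟫_ℂ

/-- The trace norm, via duality with bounded operators (the correct value for trace
class operators). -/
def traceNorm (T : H →L[ℂ] H) : ℝ :=
  ⨆ B : {B : H →L[ℂ] H // ‖B‖ ≤ 1}, ‖trH (T * (B : H →L[ℂ] H))‖

/-- Hilbert-Schmidt operators. -/
def IsHilbertSchmidt (K : H →L[ℂ] H) : Prop :=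
  ∀ (w : Set H) (b : HilbertBasis w ℂ H), Summable fun i => ‖K (b i)‖ ^ 2

/-- A (possibly unbounded) self-adjoint operator in `H`: a densely defined symmetric
operator possessing everywhere-defined bounded resolvents at every non-real point. -/
structure SelfAdjointOp (H : Type*) [NormedAddCommGroup H] [InnerProductSpace ℂ H]
    [CompleteSpace H] where
  dom : Submodule ℂ H
  dense_dom : Dense (dom : Set H)
  op : dom →ₗ[ℂ] H
  symmetric : ∀ x y : dom, ⟪op x, (y : H)⟫_ℂ = ⟪(x : H), op y⟫_ℂ
  resolvent : ℂ → H →L[ℂ] H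
  resolvent_mem : ∀ {z : ℂ}, z.im ≠ 0 → ∀ x : H, resolvent z x ∈ dom
  op_resolvent : ∀ {z : ℂ} (hz : z.im ≠ 0) (x : H),
    op ⟨resolvent z x, resolvent_mem hz x⟩ - z • resolvent z x = x
  resolvent_op : ∀ {z : ℂ} (hz : z.im ≠ 0) (x : dom),
    resolvent z (op x - z • (x : H)) = x

/-- `B = A + V` for a bounded operator `V` (with `dom B = dom A`). -/
def IsSumOf (B A : SelfAdjointOp H) (V : H →L[ℂ] H) : Prop :=
  B.dom = A.dom ∧ ∀ (x : H) (hxB : x ∈ B.dom) (hxA : x ∈ A.dom),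
    B.op ⟨x, hxB⟩ = A.op ⟨x, hxA⟩ + V x

/-- `R` is the (bounded, everywhere defined) resolvent `(A - z)⁻¹` of `A` at `z`. -/
def SelfAdjointOp.IsResolventAt (A : SelfAdjointOp H) (z : ℂ) (R : H →L[ℂ] H) : Prop :=
  (∀ x : H, R x ∈ A.dom) ∧
  (∀ (x : H) (hx : R x ∈ A.dom), A.op ⟨R x, hx⟩ - z • R x = x) ∧
  (∀ x : A.dom, R (A.op x - z • (x : H)) = x)

/-- `E` is the projection-valued spectral measure of the self-adjoint operator `A`. -/
def IsSpectralMeasure (A : SelfAdjointOp H) (E : Set ℝ → H →L[ℂ] H) : Prop :=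
  (∀ B : Set ℝ, MeasurableSet B → IsSelfAdjoint (E B)) ∧
  (∀ B C : Set ℝ, MeasurableSet B → MeasurableSet C → E B * E C = E (B ∩ C)) ∧
  (E Set.univ = 1) ∧
  (∀ (f : ℕ → Set ℝ), (∀ n, MeasurableSet (f n)) → Pairwise (Function.onFun Disjoint f) →
    ∀ x : H, HasSum (fun n => E (f n) x) (E (⋃ n, f n) x)) ∧
  ∃ μ : H → Measure ℝ,
    (∀ (f : H) (B : Set ℝ), MeasurableSet B → μ f B = ENNReal.ofReal (⟪f, E B f⟫_ℂ).re) ∧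
    ∀ (z : ℂ), z.im ≠ 0 → ∀ f : H,
      ⟪f, A.resolvent z f⟫_ℂ = ∫ l : ℝ, ((l : ℂ) - z)⁻¹ ∂(μ f)

/-- Invertibility of `T` restricted to the range of the orthogonal projection `P`
(for `T` commuting with `P`), with inverse `S` supported in `ran P`. -/
def InvertibleOn (T P : H →L[ℂ] H) : Prop :=
  ∃ S : H →L[ℂ] H, S * P = S ∧ P * S = S ∧ S * (T * P) = P ∧ (P * T) * S = P

/-- The spectral projection `J₊ = (I + J)/2` onto `H₊` for a self-adjoint unitary `J`. -/
def Jplus (J : H →L[ℂ] H) : H →L[ℂ] H := ((2 : ℂ)⁻¹) • (1 + J)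

/-- The spectral projection `J₋ = (I - J)/2` onto `H₋` for a self-adjoint unitary `J`. -/
def Jminus (J : H →L[ℂ] H) : H →L[ℂ] H := ((2 : ℂ)⁻¹) • (1 - J)

/-- `Φ₊(z) = I + J₊ K* (H₀ - z)⁻¹ K J₊`, the operator on `H` inducing `Φ₊(z)` on `H₊`
(and the identity on `H₋`). -/
def PhiPlus (H0 : SelfAdjointOp H) (J K : H →L[ℂ] H) (z : ℂ) : H →L[ℂ] H :=
  1 + Jplus J * (ContinuousLinearMap.adjoint K * H0.resolvent z * K) * Jplus J

/-- `Φ̃₋(z) = I - J₋ K* (H₊ - z)⁻¹ K J₋`, the operator on `H` inducing `Φ̃₋(z)` on `H₋`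
(and the identity on `H₊`). -/
def PhiMinusT (Hp : SelfAdjointOp H) (J K : H →L[ℂ] H) (z : ℂ) : H →L[ℂ] H :=
  1 - Jminus J * (ContinuousLinearMap.adjoint K * Hp.resolvent z * K) * Jminus J

/-!
Fix `w` in the upper half-plane. Harnack's inequality for the scalar functions `⟪f, M z f⟫` bounds a
Herglotz operator at `z` by its value at `w`; applied to `-(M z + iε)⁻¹`, which is again Herglotz,
it shows that invertibility of `M w` propagates to every `M z`.

The logarithm is differentiable along dissipative invertible operators, so `z ↦ log (M z)` is
analytic, and `0 ≤ Im log T ≤ π`: along the segments from `T` to `1` and from `T` to `-1`, whose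
endpoints have logarithms `0` and `iπ`, the derivative of the logarithm is explicit enough to make a
multiple of `Im log` monotone.

Thus `L = π⁻¹ log M` has imaginary part between `0` and `1`. The Cayley transform carries `L` to the
disc, where Schwarz's formula recovers it from its imaginary part on the circles of radius `r < 1`.
As `r → 1` these imaginary parts converge weakly along an ultrafilter; differentiating the limiting
set function by Besicovitch's theorem turns the limit into an operator density `Ξ` with values
between `0` and `1`.
-/

open scoped ComplexConjugate ComplexStarModule

variable {E : Type*} [NormedAddCommGroup E] [InnerProductSpace ℂ E]

/-! ### Dissipative operators -/

/-- A bounded operator is dissipative if its quadratic form takes values in the closed upper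
half-plane; on a complete space this says that its imaginary part is nonnegative. -/
def IsDissipative (T : E →L[ℂ] E) : Prop :=
  ∀ f, 0 ≤ (⟪f, T f⟫_ℂ).im

theorem im_inner_smul_one_apply (ζ : ℂ) (f : E) :
    (⟪f, (ζ • (1 : E →L[ℂ] E)) f⟫_ℂ).im = ζ.im * ‖f‖ ^ 2 := by
  rw [smul_apply, one_apply_eq_self, inner_smul_right, inner_self_eq_norm_sq_to_K]
  norm_cast
  exact im_mul_ofReal _ _

theorem im_inner_add_smul_one_apply (T : E →L[ℂ] E) (ζ : ℂ) (f : E) :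
    (⟪f, (T + ζ • (1 : E →L[ℂ] E)) f⟫_ℂ).im = (⟪f, T f⟫_ℂ).im + ζ.im * ‖f‖ ^ 2 := by
  rw [add_apply, inner_add_right, Complex.add_im, im_inner_smul_one_apply]

namespace IsDissipative

theorem add_smul_one {T : E →L[ℂ] E} (hT : IsDissipative T) {ζ : ℂ} (hζ : 0 ≤ ζ.im) :
    IsDissipative (T + ζ • 1) := fun f => by
  rw [im_inner_add_smul_one_apply]
  have := hT f
  positivity

theorem im_inner_inverse_nonpos {T : E →L[ℂ] E} (hT : IsDissipative T) (f : E) :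
    (⟪f, Ring.inverse T f⟫_ℂ).im ≤ 0 := by
  by_cases hu : IsUnit T
  · have hf : T (Ring.inverse T f) = f := congr($(Ring.mul_inverse_cancel T hu) f)
    have := hT (Ring.inverse T f)
    rw [hf, ← inner_conj_symm, conj_im] at this
    linarith
  · simp [Ring.inverse_non_unit T hu]

end IsDissipative

theorem imPart_eq_imaginaryPart (T : H →L[ℂ] H) : imPart T = ℑ T := by
  rw [imPart, imaginaryPart_apply_coe, star_eq_adjoint, ← Complex.coe_smul, smul_smul]
  congr 1
  field_simp
  simp

theorem inner_imaginaryPart_self (T : H →L[ℂ] H) (f : H) :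
    ⟪f, (ℑ T : H →L[ℂ] H) f⟫_ℂ = (⟪f, T f⟫_ℂ).im := by
  rw [im_eq_sub_conj, inner_conj_symm, ← adjoint_inner_right, ← inner_sub_right, ← sub_apply,
    ← star_eq_adjoint, ← imPart_eq_imaginaryPart, imPart, smul_apply, inner_smul_right,
    inv_mul_eq_div, star_eq_adjoint]

theorem isPositive_imPart_iff {T : H →L[ℂ] H} : (imPart T).IsPositive ↔ IsDissipative T := by
  have (f : H) : (ℑ T : H →L[ℂ] H).reApplyInnerSelf f = (⟪f, T f⟫_ℂ).im := by
    rw [reApplyInnerSelf_apply, inner_re_symm, inner_imaginaryPart_self]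
    exact ofReal_re _
  rw [imPart_eq_imaginaryPart, isPositive_def']
  simp [this, IsDissipative]

theorem isUnit_of_forall_mul_le_im_inner {T : H →L[ℂ] H} {c : ℝ} (hc : 0 < c)
    (h : ∀ f, c * ‖f‖ ^ 2 ≤ (⟪f, T f⟫_ℂ).im) : IsUnit T :=
  isUnit_of_forall_le_norm_inner_map T (c := ⟨c, hc.le⟩) hc fun f => by
    rw [norm_inner_symm, mul_comm]
    exact (h f).trans ((le_abs_self _).trans (abs_im_le_norm _))

theorem norm_inverse_le_of_forall_mul_le_im_inner {T : H →L[ℂ] H} {c : ℝ} (hc : 0 < c)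
    (h : ∀ f, c * ‖f‖ ^ 2 ≤ (⟪f, T f⟫_ℂ).im) : ‖Ring.inverse T‖ ≤ c⁻¹ := by
  refine opNorm_le_bound _ (by positivity) fun g => ?_
  set f := Ring.inverse T g
  have hf : T f = g :=
    congr($(Ring.mul_inverse_cancel T (isUnit_of_forall_mul_le_im_inner hc h)) g)
  have hfg : c * ‖f‖ ^ 2 ≤ ‖f‖ * ‖g‖ := calc
    c * ‖f‖ ^ 2 ≤ (⟪f, g⟫_ℂ).im := hf ▸ h f
    _ ≤ ‖⟪f, g⟫_ℂ‖ := (le_abs_self _).trans (abs_im_le_norm _)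
    _ ≤ ‖f‖ * ‖g‖ := norm_inner_le_norm f g
  rcases (norm_nonneg f).eq_or_lt with hf0 | hf0
  · rw [← hf0]
    positivity
  · rw [inv_mul_eq_div, le_div_iff₀ hc]
    nlinarith

/-- The resolvent `(T + it)⁻¹` of a dissipative operator on the negative imaginary axis; it is a
genuine inverse for `t > 0`, and also at `t = 0` if `T` is invertible. -/
def imResolvent (T : E →L[ℂ] E) (t : ℝ) : E →L[ℂ] E :=
  Ring.inverse (T + (t * I : ℂ) • 1)

namespace IsDissipative

variable {S T : H →L[ℂ] H}

theorem isUnit_add_smul_one (hT : IsDissipative T) {ζ : ℂ} (hζ : 0 < ζ.im) :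
    IsUnit (T + ζ • 1) :=
  isUnit_of_forall_mul_le_im_inner hζ fun f => by
    rw [im_inner_add_smul_one_apply]
    exact le_add_of_nonneg_left (hT f)

theorem norm_inverse_add_smul_one_le (hT : IsDissipative T) {ζ : ℂ} (hζ : 0 < ζ.im) :
    ‖Ring.inverse (T + ζ • 1)‖ ≤ ζ.im⁻¹ :=
  norm_inverse_le_of_forall_mul_le_im_inner hζ fun f => by
    rw [im_inner_add_smul_one_apply]
    exact le_add_of_nonneg_left (hT f)

theorem isUnit_add_mul_I (hT : IsDissipative T) (hu : IsUnit T) {t : ℝ} (ht : 0 ≤ t) :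
    IsUnit (T + (t * I : ℂ) • 1) := by
  rcases ht.eq_or_lt with rfl | ht
  · simpa using hu
  · exact hT.isUnit_add_smul_one (by simpa using ht)

theorem mul_norm_imResolvent_le_one (hT : IsDissipative T) {t : ℝ} (ht : 0 ≤ t) :
    t * ‖imResolvent T t‖ ≤ 1 := by
  rcases ht.eq_or_lt with rfl | ht
  · simp
  · have := hT.norm_inverse_add_smul_one_le (ζ := t * I) (by simpa using ht)
    rwa [mul_comm, ← le_div_iff₀ ht, one_div, show t⁻¹ = (t * I).im⁻¹ by simp]

theorem imResolvent_sub_imResolvent (hS : IsDissipative S) (hSu : IsUnit S)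
    (hT : IsDissipative T) (hTu : IsUnit T) {t : ℝ} (ht : 0 ≤ t) :
    imResolvent S t - imResolvent T t = imResolvent S t * (T - S) * imResolvent T t := by
  have hSt := Ring.inverse_mul_cancel _ (hS.isUnit_add_mul_I hSu ht)
  have hTt := Ring.mul_inverse_cancel _ (hT.isUnit_add_mul_I hTu ht)
  rw [← add_sub_add_right_eq_sub T S ((t * I : ℂ) • 1), mul_sub, sub_mul, mul_assoc]
  simp only [imResolvent, hSt, hTt, mul_one, one_mul]

theorem norm_imResolvent_le (hT : IsDissipative T) (hu : IsUnit T) {t : ℝ} (ht : 0 ≤ t) :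
    ‖imResolvent T t‖ ≤ (2 * ‖Ring.inverse T‖ + 1) / (1 + t) := by
  set A := Ring.inverse T
  set R := imResolvent T t
  have hmul : t * ‖R‖ ≤ 1 := hT.mul_norm_imResolvent_le_one ht
  have hA : A = R + (t * I : ℂ) • (A * R) := calc
    A = A * ((T + (t * I : ℂ) • 1) * R) := by
      simp only [R, imResolvent]
      rw [Ring.mul_inverse_cancel _ (hT.isUnit_add_mul_I hu ht), mul_one]
    _ = R + (t * I : ℂ) • (A * R) := by
      rw [add_mul, mul_add, ← mul_assoc, Ring.inverse_mul_cancel T hu, smul_one_mul, one_mul,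
        mul_smul_comm]
  have hR : ‖R‖ ≤ 2 * ‖A‖ := calc
    ‖R‖ = ‖A - (t * I : ℂ) • (A * R)‖ := by rw [← eq_sub_of_add_eq hA.symm]
    _ ≤ ‖A‖ + t * (‖A‖ * ‖R‖) := by
      grw [norm_sub_le, norm_smul, norm_mul_le A R]
      simp [abs_of_nonneg ht]
    _ = ‖A‖ + ‖A‖ * (t * ‖R‖) := by ring
    _ ≤ 2 * ‖A‖ := by grw [hmul]; linarith
  rw [le_div_iff₀ (by positivity)]
  linarith

theorem isUnit_of_norm_imResolvent_le (hT : IsDissipative T) {C : ℝ}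
    (hC : ∀ t > 0, ‖imResolvent T t‖ ≤ C) : IsUnit T := by
  set t := (|C| + 1)⁻¹
  have ht : 0 < t := by positivity
  have hu := hT.isUnit_add_smul_one (ζ := t * I) (by simpa using ht)
  have hsmall : ‖(t * I : ℂ) • imResolvent T t‖ < 1 := calc
    ‖(t * I : ℂ) • imResolvent T t‖ = t * ‖imResolvent T t‖ := by
      simp [norm_smul, abs_of_pos ht]
    _ ≤ t * |C| := by grw [hC t ht, ← le_abs_self]
    _ < 1 := by rw [inv_mul_lt_one₀ (by positivity)]; linarith
  have hfactor : T = (T + (t * I : ℂ) • 1) * (1 - (t * I : ℂ) • imResolvent T t) := by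
    rw [mul_sub, mul_one, mul_smul_comm, imResolvent, Ring.mul_inverse_cancel _ hu,
      add_sub_cancel_right]
  rw [hfactor]
  exact hu.mul (isUnit_one_sub_of_norm_lt_one hsmall)

end IsDissipative

/-! ### Herglotz operators -/

theorem norm_inner_apply_le_of_norm_inner_self_le {T : E →L[ℂ] E} {C : ℝ}
    (h : ∀ f, ‖⟪f, T f⟫_ℂ‖ ≤ C * ‖f‖ ^ 2) (f g : E) :
    ‖⟪f, T g⟫_ℂ‖ ≤ C * (‖f‖ ^ 2 + ‖g‖ ^ 2) := by
  have hnorm (x y : E) : ‖x + y‖ ^ 2 + ‖x - y‖ ^ 2 = 2 * (‖x‖ ^ 2 + ‖y‖ ^ 2) := by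
    simpa only [sq] using parallelogram_law_with_norm ℂ x y
  have hinner (x : E) : ‖⟪T x, x⟫_ℂ‖ ≤ C * ‖x‖ ^ 2 := norm_inner_symm (𝕜 := ℂ) x (T x) ▸ h x
  have hpol := inner_map_polarization (T : E →ₗ[ℂ] E) f g
  simp only [coe_coe] at hpol
  rw [norm_inner_symm, hpol, norm_div, norm_ofNat, div_le_iff₀ four_pos]
  have hI : ‖I • g‖ = ‖g‖ := by simp [norm_smul]
  grw [norm_sub_le, norm_add_le, norm_sub_le, norm_mul, norm_mul, norm_I, one_mul, one_mul,
    hinner, hinner, hinner, hinner]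
  linear_combination C * hnorm f g + C * hnorm f (I • g) + 2 * C * (‖I • g‖ + ‖g‖) * hI

theorem norm_le_two_mul_of_norm_inner_self_le {T : E →L[ℂ] E} {C : ℝ} (hC : 0 ≤ C)
    (h : ∀ f, ‖⟪f, T f⟫_ℂ‖ ≤ C * ‖f‖ ^ 2) : ‖T‖ ≤ 2 * C := by
  refine opNorm_le_of_re_inner_le (𝕜 := ℂ) (by positivity) fun f g hf hg => ?_
  have := norm_inner_apply_le_of_norm_inner_self_le h g f
  rw [hf, hg] at this
  grw [inner_re_symm, RCLike.re_le_norm, this]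
  linarith

/-- The Cayley transform of the upper half-plane onto the unit disc that sends `w` to `0`. -/
def cayley (w z : ℂ) : ℂ :=
  (z - w) / (z - conj w)

/-- The inverse of the Cayley transform `cayley w`. -/
def invCayley (w ω : ℂ) : ℂ :=
  (w - conj w * ω) / (1 - ω)

theorem one_sub_ne_zero_of_norm_lt_one {ω : ℂ} (hω : ‖ω‖ < 1) : 1 - ω ≠ 0 := by
  rintro h
  simp [← sub_eq_zero.mp h] at hω

theorem sub_conj_ne_zero {w z : ℂ} (hw : 0 < w.im) (hz : 0 < z.im) : z - conj w ≠ 0 := fun h => by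
  have := congr(im $h)
  simp only [sub_im, conj_im, zero_im] at this
  linarith

theorem norm_cayley_lt_one {w z : ℂ} (hw : 0 < w.im) (hz : 0 < z.im) : ‖cayley w z‖ < 1 := by
  rw [cayley, norm_div, div_lt_one (norm_pos_iff.mpr (sub_conj_ne_zero hw hz)),
    ← sq_lt_sq₀ (norm_nonneg _) (norm_nonneg _), Complex.sq_norm, Complex.sq_norm, normSq_apply,
    normSq_apply]
  simp only [sub_re, sub_im, conj_re, conj_im]
  nlinarith [mul_pos hw hz]

theorem invCayley_cayley {w z : ℂ} (hw : 0 < w.im) (hz : 0 < z.im) :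
    invCayley w (cayley w z) = z := by
  have hzw := sub_conj_ne_zero hw hz
  have : 1 - cayley w z ≠ 0 := one_sub_ne_zero_of_norm_lt_one (norm_cayley_lt_one hw hz)
  rw [invCayley, div_eq_iff this, cayley]
  field_simp
  ring

theorem invCayley_zero (w : ℂ) : invCayley w 0 = w := by
  simp [invCayley]

theorem im_invCayley_pos {w ω : ℂ} (hw : 0 < w.im) (hω : ‖ω‖ < 1) : 0 < (invCayley w ω).im := by
  have hden : 0 < normSq (1 - ω) := normSq_pos.mpr (one_sub_ne_zero_of_norm_lt_one hω)
  have him : (invCayley w ω).im = w.im * (1 - normSq ω) / normSq (1 - ω) := by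
    rw [invCayley, div_im, ← sub_div, normSq_apply ω]
    simp
    ring
  have hlt : normSq ω < 1 := by
    rw [← Complex.sq_norm]
    exact pow_lt_one₀ (norm_nonneg ω) hω two_ne_zero
  rw [him]
  have := sub_pos.mpr hlt
  positivity

theorem differentiableOn_invCayley (w : ℂ) :
    DifferentiableOn ℂ (invCayley w) (Metric.ball 0 1) := by
  refine DifferentiableOn.div (by fun_prop) (by fun_prop) fun ω hω => ?_
  exact one_sub_ne_zero_of_norm_lt_one (by simpa using hω)

theorem differentiableOn_comp_invCayley {F : Type*} [NormedAddCommGroup F] [NormedSpace ℂ F]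
    {f : ℂ → F} (hf : DifferentiableOn ℂ f {z | 0 < z.im}) {w : ℂ} (hw : 0 < w.im) :
    DifferentiableOn ℂ (f ∘ invCayley w) (Metric.ball 0 1) :=
  hf.comp (differentiableOn_invCayley w) fun ω hω => im_invCayley_pos hw (by simpa using hω)

theorem norm_le_of_re_nonpos_on_ball {f : ℂ → ℂ} (hf : DifferentiableOn ℂ f (Metric.ball 0 1))
    (hre : ∀ ω ∈ Metric.ball 0 1, (f ω).re ≤ 0) {ω : ℂ} (hω : ω ∈ Metric.ball 0 1) :
    ‖f ω‖ ≤ (1 + ‖ω‖) / (1 - ‖ω‖) * ‖f 0‖ := by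
  have hlim : Tendsto (fun ε : ℝ => 2 * ε * ‖ω‖ / (1 - ‖ω‖) + ‖f 0‖ * (1 + ‖ω‖) / (1 - ‖ω‖))
      (𝓝[>] 0) (𝓝 ((1 + ‖ω‖) / (1 - ‖ω‖) * ‖f 0‖)) := by
    have : Continuous fun ε : ℝ =>
        2 * ε * ‖ω‖ / (1 - ‖ω‖) + ‖f 0‖ * (1 + ‖ω‖) / (1 - ‖ω‖) := by fun_prop
    convert (this.tendsto 0).mono_left nhdsWithin_le_nhds using 2
    ring
  refine ge_of_tendsto hlim (eventually_mem_nhdsWithin.mono fun ε hε => ?_)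
  exact borelCaratheodory hε hf (fun ω hω => (hre ω hω).trans (le_of_lt hε)) one_pos hω

/-- The constant in Harnack's inequality for the points `w`, `z` of the upper half-plane. -/
def harnackConst (w z : ℂ) : ℝ :=
  (1 + ‖cayley w z‖) / (1 - ‖cayley w z‖)

theorem harnackConst_nonneg {w z : ℂ} (hw : 0 < w.im) (hz : 0 < z.im) : 0 ≤ harnackConst w z := by
  have := sub_pos.mpr (norm_cayley_lt_one hw hz)
  unfold harnackConst
  positivity

theorem norm_le_harnackConst_mul {m : ℂ → ℂ} (hm : DifferentiableOn ℂ m {z | 0 < z.im})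
    (him : ∀ z, 0 < z.im → 0 ≤ (m z).im) {w z : ℂ} (hw : 0 < w.im) (hz : 0 < z.im) :
    ‖m z‖ ≤ harnackConst w z * ‖m w‖ := by
  have hre (ω : ℂ) (hω : ω ∈ Metric.ball 0 1) : (I * m (invCayley w ω)).re ≤ 0 := by
    simpa using him _ (im_invCayley_pos hw (by simpa using hω))
  have := norm_le_of_re_nonpos_on_ball ((differentiableOn_comp_invCayley hm hw).const_mul I) hre
    (ω := cayley w z) (by simpa using norm_cayley_lt_one hw hz)
  simpa [invCayley_cayley hw hz, invCayley_zero, harnackConst] using this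

namespace IsHerglotz

variable {M : ℂ → H →L[ℂ] H}

theorem isDissipative (hM : IsHerglotz M) {z : ℂ} (hz : 0 < z.im) : IsDissipative (M z) :=
  isPositive_imPart_iff.mp (hM.2 z hz)

theorem add_smul_one (hM : IsHerglotz M) {ζ : ℂ} (hζ : 0 ≤ ζ.im) :
    IsHerglotz fun z => M z + ζ • 1 :=
  ⟨hM.1.add_const _, fun _ hz =>
    isPositive_imPart_iff.mpr ((hM.isDissipative hz).add_smul_one hζ)⟩

theorem neg_inverse (hM : IsHerglotz M) (hu : ∀ z, 0 < z.im → IsUnit (M z)) :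
    IsHerglotz fun z => -Ring.inverse (M z) := by
  refine ⟨DifferentiableOn.neg fun z hz => ?_, fun z hz => isPositive_imPart_iff.mpr fun f => ?_⟩
  · exact (differentiableAt_inverse (hu z hz)).comp_differentiableWithinAt z (hM.1 z hz)
  · simpa using (hM.isDissipative hz).im_inner_inverse_nonpos f

theorem norm_le (hM : IsHerglotz M) {w z : ℂ} (hw : 0 < w.im) (hz : 0 < z.im) :
    ‖M z‖ ≤ 2 * (harnackConst w z * ‖M w‖) := by
  refine norm_le_two_mul_of_norm_inner_self_le
    (mul_nonneg (harnackConst_nonneg hw hz) (norm_nonneg _)) fun f => ?_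
  have hdiff : DifferentiableOn ℂ (fun z => ⟪f, M z f⟫_ℂ) {z | 0 < z.im} :=
    (innerSL ℂ f ∘L ContinuousLinearMap.apply ℂ H f).differentiable.comp_differentiableOn hM.1
  calc ‖⟪f, M z f⟫_ℂ‖ ≤ harnackConst w z * ‖⟪f, M w f⟫_ℂ‖ :=
      norm_le_harnackConst_mul hdiff (fun _ hz => hM.isDissipative hz f) hw hz
    _ ≤ harnackConst w z * (‖f‖ * (‖M w‖ * ‖f‖)) := by
      have := harnackConst_nonneg hw hz
      grw [norm_inner_le_norm, (M w).le_opNorm]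
    _ = harnackConst w z * ‖M w‖ * ‖f‖ ^ 2 := by ring

/-- Harnack's inequality for the Herglotz operators `-(M + it)⁻¹`, bounded at `w` uniformly in
`t`, bounds `(M z + it)⁻¹` uniformly in `t`. -/
theorem isUnit_of_isUnit (hM : IsHerglotz M) {w z : ℂ} (hw : 0 < w.im) (hz : 0 < z.im)
    (hMw : IsUnit (M w)) : IsUnit (M z) := by
  refine (hM.isDissipative hz).isUnit_of_norm_imResolvent_le
    (C := 2 * (harnackConst w z * (2 * ‖Ring.inverse (M w)‖ + 1))) fun t ht => ?_
  have htI : 0 < (t * I).im := by simpa using ht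
  have hharnack := ((hM.add_smul_one htI.le).neg_inverse fun z hz =>
    (hM.isDissipative hz).isUnit_add_smul_one htI).norm_le hw hz
  rw [norm_neg, norm_neg] at hharnack
  have hMwt : ‖imResolvent (M w) t‖ ≤ 2 * ‖Ring.inverse (M w)‖ + 1 :=
    ((hM.isDissipative hw).norm_imResolvent_le hMw ht.le).trans
      (div_le_self (by positivity) (by linarith))
  have := harnackConst_nonneg hw hz
  grw [imResolvent, hharnack, ← imResolvent, hMwt]

end IsHerglotz

/-! ### The logarithm -/

theorem ringInverse_smul_one {𝕜 A : Type*} [Field 𝕜] [Ring A] [Algebra 𝕜 A] (c : 𝕜) :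
    Ring.inverse (c • (1 : A)) = c⁻¹ • 1 := by
  rcases eq_or_ne c 0 with rfl | hc
  · simp
  · have h := (Ring.inverse_mul_eq_iff_eq_mul (c • (1 : A)) 1 (c⁻¹ • 1)
      (isUnit_one.smul (Units.mk0 c hc))).mpr
    rw [mul_one] at h
    exact h (by rw [smul_mul_smul_comm, mul_inv_cancel₀ hc, one_smul, one_mul])

theorem isDissipative_ofReal_smul_one (c : ℝ) : IsDissipative ((c : ℂ) • (1 : E →L[ℂ] E)) :=
  fun f => by rw [im_inner_smul_one_apply, ofReal_im, zero_mul]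

theorem imResolvent_ofReal_smul_one (c t : ℝ) :
    imResolvent ((c : ℂ) • (1 : E →L[ℂ] E)) t = (c + t * I : ℂ)⁻¹ • 1 := by
  rw [imResolvent, ← add_smul, ringInverse_smul_one]

theorem logIntegrand_eq (T : E →L[ℂ] E) (t : ℝ) :
    logIntegrand T t = imResolvent T t - imResolvent 1 t := by
  have := imResolvent_ofReal_smul_one (E := E) 1 t
  rw [ofReal_one, one_smul] at this
  rw [this]
  rfl

theorem div_mul_div_le_inv_one_add_sq {a b t : ℝ} (hab : 0 ≤ a * b) (ht : 0 ≤ t) :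
    a / (1 + t) * (b / (1 + t)) ≤ a * b * (1 + t ^ 2)⁻¹ := by
  rw [div_mul_div_comm, div_eq_mul_inv]
  gcongr
  nlinarith

namespace IsDissipative

variable {S T : H →L[ℂ] H}

theorem norm_imResolvent_mul_mul_le (hS : IsDissipative S) (hSu : IsUnit S)
    (hT : IsDissipative T) (hTu : IsUnit T) (X : H →L[ℂ] H) {t : ℝ} (ht : 0 ≤ t) :
    ‖imResolvent S t * X * imResolvent T t‖ ≤
      (2 * ‖Ring.inverse S‖ + 1) * (2 * ‖Ring.inverse T‖ + 1) * ‖X‖ * (1 + t ^ 2)⁻¹ := by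
  set a := 2 * ‖Ring.inverse S‖ + 1
  set b := 2 * ‖Ring.inverse T‖ + 1
  calc ‖imResolvent S t * X * imResolvent T t‖
      ≤ ‖imResolvent S t‖ * ‖X‖ * ‖imResolvent T t‖ := norm_mul₃_le
    _ ≤ a / (1 + t) * ‖X‖ * (b / (1 + t)) := by
        gcongr
        exacts [hS.norm_imResolvent_le hSu ht, hT.norm_imResolvent_le hTu ht]
    _ = a / (1 + t) * (b / (1 + t)) * ‖X‖ := by ring
    _ ≤ a * b * (1 + t ^ 2)⁻¹ * ‖X‖ := by
        exact mul_le_mul_of_nonneg_right (div_mul_div_le_inv_one_add_sq (by positivity) ht)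
          (norm_nonneg X)
    _ = a * b * ‖X‖ * (1 + t ^ 2)⁻¹ := by ring

theorem continuousOn_imResolvent (hT : IsDissipative T) (hu : IsUnit T) :
    ContinuousOn (imResolvent T) (Set.Ici 0) := fun t ht => by
  obtain ⟨u, hut⟩ := hT.isUnit_add_mul_I hu ht
  have hinv := NormedRing.inverse_continuousAt u
  rw [hut] at hinv
  exact (ContinuousAt.comp (f := fun t : ℝ => T + (t * I : ℂ) • 1) hinv
    (by fun_prop)).continuousWithinAt

theorem integrableOn_imResolvent_mul_mul (hS : IsDissipative S) (hSu : IsUnit S)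
    (hT : IsDissipative T) (hTu : IsUnit T) (X : H →L[ℂ] H) :
    IntegrableOn (fun t => imResolvent S t * X * imResolvent T t) (Set.Ioi 0) := by
  have hcont : ContinuousOn (fun t => imResolvent S t * X * imResolvent T t) (Set.Ioi 0) :=
    (((hS.continuousOn_imResolvent hSu).mul continuousOn_const).mul
      (hT.continuousOn_imResolvent hTu)).mono Set.Ioi_subset_Ici_self
  refine Integrable.mono' (integrable_inv_one_add_sq.integrableOn.const_mul
    ((2 * ‖Ring.inverse S‖ + 1) * (2 * ‖Ring.inverse T‖ + 1) * ‖X‖))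
    (hcont.aestronglyMeasurable measurableSet_Ioi) ?_
  filter_upwards [ae_restrict_mem measurableSet_Ioi] with t ht
  exact norm_imResolvent_mul_mul_le hS hSu hT hTu X (le_of_lt ht)

theorem integrableOn_imResolvent_sub (hS : IsDissipative S) (hSu : IsUnit S)
    (hT : IsDissipative T) (hTu : IsUnit T) :
    IntegrableOn (fun t => imResolvent S t - imResolvent T t) (Set.Ioi 0) :=
  (integrableOn_imResolvent_mul_mul hS hSu hT hTu (T - S)).congr_fun
    (fun _ ht => (imResolvent_sub_imResolvent hS hSu hT hTu (le_of_lt ht)).symm) measurableSet_Ioi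

end IsDissipative

theorem isDissipative_one : IsDissipative (1 : E →L[ℂ] E) := by
  simpa using isDissipative_ofReal_smul_one (E := E) 1

namespace IsDissipative

variable {S T : H →L[ℂ] H}

theorem opLog_eq (hT : IsDissipative T) (hu : IsUnit T) :
    opLog T = -I • ∫ t in Set.Ioi (0 : ℝ), (imResolvent T t - imResolvent 1 t) := by
  have hint := integrableOn_imResolvent_sub hT hu isDissipative_one isUnit_one
  simp only [opLog, logIntegrand_eq]
  exact ((intervalIntegral_tendsto_integral_Ioi 0 hint tendsto_id).const_smul (-I)).limUnder_eq

theorem opLog_sub_opLog (hS : IsDissipative S) (hSu : IsUnit S)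
    (hT : IsDissipative T) (hTu : IsUnit T) :
    opLog S - opLog T = -I • ∫ t in Set.Ioi (0 : ℝ), (imResolvent S t - imResolvent T t) := by
  rw [hS.opLog_eq hSu, hT.opLog_eq hTu, ← smul_sub, ← integral_sub
    (integrableOn_imResolvent_sub hS hSu isDissipative_one isUnit_one)
    (integrableOn_imResolvent_sub hT hTu isDissipative_one isUnit_one)]
  simp only [sub_sub_sub_cancel_right]

end IsDissipative

/-- The derivative of `opLog` at `T`, the operator `X ↦ i ∫₀^∞ (T + it)⁻¹ X (T + it)⁻¹ dt`. -/
def opLogDeriv (T : H →L[ℂ] H) : (H →L[ℂ] H) →L[ℂ] (H →L[ℂ] H) :=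
  I • ∫ t in Set.Ioi (0 : ℝ), mulLeftRight ℂ (H →L[ℂ] H) (imResolvent T t) (imResolvent T t)

namespace IsDissipative

variable {S T : H →L[ℂ] H}

theorem opLogDeriv_apply (hT : IsDissipative T) (hu : IsUnit T) (X : H →L[ℂ] H) :
    opLogDeriv T X = I • ∫ t in Set.Ioi (0 : ℝ), imResolvent T t * X * imResolvent T t := by
  have hR := (hT.continuousOn_imResolvent hu).mono Set.Ioi_subset_Ici_self
  have hcont : ContinuousOn (fun t => mulLeftRight ℂ (H →L[ℂ] H) (imResolvent T t)
      (imResolvent T t)) (Set.Ioi 0) :=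
    ((mulLeftRight ℂ (H →L[ℂ] H)).continuous.comp_continuousOn hR).clm_apply hR
  have hint : IntegrableOn (fun t => mulLeftRight ℂ (H →L[ℂ] H) (imResolvent T t)
      (imResolvent T t)) (Set.Ioi 0) := by
    refine Integrable.mono' (integrable_inv_one_add_sq.integrableOn.const_mul
      ((2 * ‖Ring.inverse T‖ + 1) * (2 * ‖Ring.inverse T‖ + 1)))
      (hcont.aestronglyMeasurable measurableSet_Ioi) ?_
    filter_upwards [ae_restrict_mem measurableSet_Ioi] with t ht
    refine opNorm_le_bound _ (by positivity) fun X => ?_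
    have := norm_imResolvent_mul_mul_le hT hu hT hu X (le_of_lt ht)
    rwa [mul_right_comm] at this
  rw [opLogDeriv, smul_apply, integral_apply hint]
  rfl

/-- The linearisation error in the integral for `opLog` is `R_T (S - T) R_T (S - T) R_S`,
where `R_T` and `R_S` are the resolvents at `-it`. -/
theorem norm_opLog_sub_sub_le (hS : IsDissipative S) (hSu : IsUnit S)
    (hT : IsDissipative T) (hTu : IsUnit T) :
    ‖opLog S - opLog T - opLogDeriv T (S - T)‖ ≤
      Real.pi / 2 * (2 * ‖Ring.inverse T‖ + 1) ^ 2 * (2 * ‖Ring.inverse S‖ + 1) *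
        ‖S - T‖ ^ 2 := by
  set a := 2 * ‖Ring.inverse T‖ + 1
  set b := 2 * ‖Ring.inverse S‖ + 1
  have herror {t : ℝ} (ht : 0 ≤ t) :
      imResolvent S t - imResolvent T t + imResolvent T t * (S - T) * imResolvent T t =
        imResolvent T t * ((S - T) * imResolvent T t * (S - T)) * imResolvent S t := by
    have h : imResolvent S t - imResolvent T t =
        -(imResolvent T t * (S - T) * imResolvent S t) := by
      rw [← imResolvent_sub_imResolvent hT hTu hS hSu ht, neg_sub]
    calc _ = imResolvent T t * (S - T) * (imResolvent T t - imResolvent S t) := by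
          rw [h, mul_sub (_ * _), neg_add_eq_sub]
      _ = _ := by
          rw [imResolvent_sub_imResolvent hT hTu hS hSu ht]
          simp only [mul_assoc]
  have hbound : ∀ᵐ t ∂volume.restrict (Set.Ioi (0 : ℝ)),
      ‖imResolvent S t - imResolvent T t + imResolvent T t * (S - T) * imResolvent T t‖ ≤
        a * b * (‖S - T‖ * a * ‖S - T‖) * (1 + t ^ 2)⁻¹ := by
    filter_upwards [ae_restrict_mem measurableSet_Ioi] with t ht
    have ht : 0 ≤ t := le_of_lt ht
    have hRT : ‖imResolvent T t‖ ≤ a :=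
      (hT.norm_imResolvent_le hTu ht).trans (div_le_self (by positivity) (by linarith))
    grw [herror ht, norm_imResolvent_mul_mul_le hT hTu hS hSu _ ht, norm_mul₃_le, hRT]
  rw [opLog_sub_opLog hS hSu hT hTu, hT.opLogDeriv_apply hTu, neg_smul, ← neg_add', ← smul_add,
    norm_neg, norm_smul, norm_I, one_mul, ← integral_add
      (integrableOn_imResolvent_sub hS hSu hT hTu)
      (integrableOn_imResolvent_mul_mul hT hTu hT hTu _)]
  refine (norm_integral_le_of_norm_le (integrable_inv_one_add_sq.integrableOn.const_mul _)
    hbound).trans_eq ?_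
  rw [integral_const_mul, integral_Ioi_inv_one_add_sq, Real.arctan_zero]
  ring

theorem hasFDerivWithinAt_opLog (hT : IsDissipative T) (hu : IsUnit T) :
    HasFDerivWithinAt opLog (opLogDeriv T) {S | IsDissipative S ∧ IsUnit S} T := by
  set a := 2 * ‖Ring.inverse T‖ + 1
  have hinv : ∀ᶠ S in 𝓝 T, ‖Ring.inverse S‖ < a := by
    obtain ⟨u, rfl⟩ := hu
    refine (NormedRing.inverse_continuousAt u).norm.eventually (gt_mem_nhds ?_)
    linarith [norm_nonneg (Ring.inverse (u : H →L[ℂ] H))]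
  have hquad : (fun S => opLog S - opLog T - opLogDeriv T (S - T))
      =O[𝓝[{S | IsDissipative S ∧ IsUnit S}] T] fun S => ‖S - T‖ ^ 2 := by
    refine Asymptotics.IsBigO.of_bound (Real.pi / 2 * a ^ 2 * (2 * a + 1)) ?_
    filter_upwards [self_mem_nhdsWithin, nhdsWithin_le_nhds hinv] with S ⟨hS, hSu⟩ hSa
    rw [norm_pow, norm_norm]
    grw [norm_opLog_sub_sub_le hS hSu hT hu, hSa]
  exact .of_isLittleO (hquad.trans_isLittleO
    ((Asymptotics.isLittleO_norm_pow_id one_lt_two).comp_tendsto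
      (tendsto_sub_nhds_zero_iff.mpr (tendsto_id'.mpr nhdsWithin_le_nhds))))

theorem continuousWithinAt_opLog (hT : IsDissipative T) (hu : IsUnit T) :
    ContinuousWithinAt opLog {S | IsDissipative S ∧ IsUnit S} T :=
  (hT.hasFDerivWithinAt_opLog hu).continuousWithinAt

theorem hasDerivAt_imResolvent (hT : IsDissipative T) (hu : IsUnit T) {t : ℝ} (ht : 0 ≤ t) :
    HasDerivAt (imResolvent T) (-(I • (imResolvent T t * imResolvent T t))) t := by
  obtain ⟨u, hut⟩ := hT.isUnit_add_mul_I hu ht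
  have hinv := hasFDerivAt_ringInverse (𝕜 := ℝ) u
  have hline : HasDerivAt (fun t : ℝ => T + (t * I : ℂ) • (1 : H →L[ℂ] H)) (I • 1) t := by
    simpa using ((ofRealCLM.hasDerivAt.mul_const I).smul_const (1 : H →L[ℂ] H)).const_add T
  have hR : ((u⁻¹ : (H →L[ℂ] H)ˣ) : H →L[ℂ] H) = imResolvent T t := by
    rw [imResolvent, ← hut, Ring.inverse_unit]
  rw [hR, hut] at hinv
  refine (hinv.comp_hasDerivAt t hline).congr_deriv ?_
  rw [neg_apply, mulLeftRight_apply, mul_smul_comm, mul_one, smul_mul_assoc]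

theorem tendsto_imResolvent_atTop (hT : IsDissipative T) (hu : IsUnit T) :
    Tendsto (imResolvent T) atTop (𝓝 0) := by
  refine squeeze_zero_norm' (a := fun t => (2 * ‖Ring.inverse T‖ + 1) / (1 + t)) ?_ ?_
  · filter_upwards [eventually_ge_atTop 0] with t ht using hT.norm_imResolvent_le hu ht
  · exact tendsto_const_nhds.div_atTop (tendsto_atTop_add_const_left _ _ tendsto_id)

/-- `i (T + it)⁻²` is the derivative of `-(T + it)⁻¹`. -/
theorem opLogDeriv_one (hT : IsDissipative T) (hu : IsUnit T) :
    opLogDeriv T 1 = Ring.inverse T := by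
  have hint := integrableOn_imResolvent_mul_mul hT hu hT hu 1
  simp only [mul_one] at hint
  have hFTC := integral_Ioi_of_hasDerivAt_of_tendsto
    (hT.continuousOn_imResolvent hu 0 Set.self_mem_Ici)
    (fun t ht => hT.hasDerivAt_imResolvent hu (le_of_lt ht))
    (hint.smul I).neg
    (hT.tendsto_imResolvent_atTop hu)
  rw [integral_neg, integral_smul, zero_sub, neg_inj] at hFTC
  rw [hT.opLogDeriv_apply hu]
  simp only [mul_one, hFTC]
  simp [imResolvent]

theorem opLogDeriv_of_commute (hT : IsDissipative T) (hu : IsUnit T) {X : H →L[ℂ] H}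
    (hX : Commute X T) : opLogDeriv T X = X * Ring.inverse T := by
  rw [← hT.opLogDeriv_one hu, hT.opLogDeriv_apply hu, hT.opLogDeriv_apply hu, mul_smul_comm,
    ← integral_const_mul_of_integrable (integrableOn_imResolvent_mul_mul hT hu hT hu 1)]
  congr 1
  refine setIntegral_congr_fun measurableSet_Ioi fun t ht => ?_
  have hXR : Commute X (imResolvent T t) := by
    obtain ⟨u, hut⟩ := hT.isUnit_add_mul_I hu (le_of_lt ht)
    rw [imResolvent, ← hut, Ring.inverse_unit]
    refine Commute.units_inv_right ?_
    rw [hut]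
    exact hX.add_right ((Commute.one_right X).smul_right _)
  simp only [mul_one, ← mul_assoc, hXR.eq]

end IsDissipative

theorem opLog_one : opLog (1 : H →L[ℂ] H) = 0 := by
  simp [isDissipative_one.opLog_eq isUnit_one]

theorem opLog_neg_one : opLog (-1 : H →L[ℂ] H) = (Real.pi * I : ℂ) • 1 := by
  have hneg : IsDissipative (-1 : H →L[ℂ] H) := by
    simpa using isDissipative_ofReal_smul_one (E := H) (-1)
  have hdiff (t : ℝ) : imResolvent (-1 : H →L[ℂ] H) t - imResolvent 1 t =
      ((-2 * (1 + t ^ 2)⁻¹ : ℝ) : ℂ) • 1 := by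
    have hres_one := imResolvent_ofReal_smul_one (E := H) 1 t
    have hres_neg_one := imResolvent_ofReal_smul_one (E := H) (-1) t
    simp only [ofReal_neg, ofReal_one, neg_smul, one_smul] at hres_one hres_neg_one
    have hne_one : (1 + t * I : ℂ) ≠ 0 := fun h => by simpa using congr(($h).re)
    have hne_neg_one : (-1 + t * I : ℂ) ≠ 0 := fun h => by simpa using congr(($h).re)
    have hne_sq : (1 + t ^ 2 : ℂ) ≠ 0 := by norm_cast; positivity
    rw [hres_one, hres_neg_one, ← sub_smul]
    congr 1
    push_cast
    field_simp
    linear_combination (2 * t ^ 2 : ℂ) * I_sq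
  rw [hneg.opLog_eq isUnit_one.neg]
  simp only [hdiff]
  rw [integral_smul_const, integral_complex_ofReal, integral_const_mul, integral_Ioi_inv_one_add_sq,
    Real.arctan_zero, smul_smul]
  congr 1
  push_cast
  ring

theorem im_inner_lineMap_apply (T : E →L[ℂ] E) (c s : ℝ) (f : E) :
    (⟪f, AffineMap.lineMap T ((c : ℂ) • (1 : E →L[ℂ] E)) s f⟫_ℂ).im =
      (1 - s) * (⟪f, T f⟫_ℂ).im := by
  rw [AffineMap.lineMap_apply_module, ← Complex.coe_smul, ← Complex.coe_smul, smul_smul,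
    ← ofReal_mul, im_inner_add_smul_one_apply, smul_apply, inner_smul_right, im_ofReal_mul,
    ofReal_im, zero_mul, add_zero]

theorem isDissipative_isUnit_lineMap {T : H →L[ℂ] H} {ε c s : ℝ} (hε : 0 < ε)
    (hT : ∀ f, ε * ‖f‖ ^ 2 ≤ (⟪f, T f⟫_ℂ).im) (hc : c ≠ 0) (hs : s ∈ Set.Icc 0 1) :
    IsDissipative (AffineMap.lineMap T ((c : ℂ) • (1 : H →L[ℂ] H)) s) ∧
      IsUnit (AffineMap.lineMap T ((c : ℂ) • (1 : H →L[ℂ] H)) s) := by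
  have hs' : 0 ≤ 1 - s := sub_nonneg.mpr hs.2
  refine ⟨fun f => ?_, ?_⟩
  · rw [im_inner_lineMap_apply]
    have := (by positivity : 0 ≤ ε * ‖f‖ ^ 2).trans (hT f)
    positivity
  · rcases hs'.eq_or_lt with hs1 | hs1
    · obtain rfl : s = 1 := by linarith
      rw [AffineMap.lineMap_apply_one]
      exact isUnit_one.smul (Units.mk0 (c : ℂ) (ofReal_ne_zero.mpr hc))
    · refine isUnit_of_forall_mul_le_im_inner (mul_pos hs1 hε) fun f => ?_
      rw [im_inner_lineMap_apply, mul_assoc]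
      exact mul_le_mul_of_nonneg_left (hT f) hs'

theorem IsDissipative.opLogDeriv_smul_one_sub {T : H →L[ℂ] H} (hT : IsDissipative T)
    (hu : IsUnit T) (ζ : ℂ) : opLogDeriv T (ζ • 1 - T) = ζ • Ring.inverse T - 1 := by
  rw [hT.opLogDeriv_of_commute hu (((Commute.one_left T).smul_left ζ).sub_left (.refl T)),
    sub_mul, smul_one_mul, Ring.mul_inverse_cancel T hu]

theorem IsDissipative.mul_im_inner_opLogDeriv_nonpos {T : H →L[ℂ] H} (hT : IsDissipative T)
    (hu : IsUnit T) (c : ℝ) (f : H) :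
    c * (⟪f, opLogDeriv T ((c : ℂ) • 1 - T) f⟫_ℂ).im ≤ 0 := by
  have hself : (⟪f, f⟫_ℂ).im = 0 := inner_self_im (𝕜 := ℂ) f
  rw [hT.opLogDeriv_smul_one_sub hu, sub_apply, inner_sub_right, sub_im, one_apply_eq_self, hself,
    sub_zero, smul_apply, inner_smul_right, im_ofReal_mul, ← mul_assoc]
  exact mul_nonpos_of_nonneg_of_nonpos (mul_self_nonneg c) (hT.im_inner_inverse_nonpos f)

/-- Along the segment `A s` from `T` to `c`, the derivative of `log (A s)` is
`(1 - s)⁻¹ (c (A s)⁻¹ - 1)`, and `(A s)⁻¹` has nonpositive imaginary part. -/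
theorem mul_im_inner_opLog_le {T : H →L[ℂ] H} {ε c : ℝ} (hε : 0 < ε)
    (hT : ∀ f, ε * ‖f‖ ^ 2 ≤ (⟪f, T f⟫_ℂ).im) (hc : c ≠ 0) (f : H) :
    c * (⟪f, opLog ((c : ℂ) • (1 : H →L[ℂ] H)) f⟫_ℂ).im ≤ c * (⟪f, opLog T f⟫_ℂ).im := by
  set A : ℝ →ᵃ[ℝ] H →L[ℂ] H := AffineMap.lineMap T ((c : ℂ) • (1 : H →L[ℂ] H))
  let φ : (H →L[ℂ] H) →L[ℝ] ℝ :=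
    imCLM ∘L ContinuousLinearMap.restrictScalars ℝ
      (innerSL ℂ f ∘L ContinuousLinearMap.apply ℂ H f)
  have hA : ∀ s ∈ Set.Icc (0 : ℝ) 1, IsDissipative (A s) ∧ IsUnit (A s) := fun s hs =>
    isDissipative_isUnit_lineMap hε hT hc hs
  have hderiv : ∀ s ∈ Set.Icc (0 : ℝ) 1, HasDerivWithinAt (fun s => c * φ (opLog (A s)))
      (c * φ (opLogDeriv (A s) ((c : ℂ) • 1 - T))) (Set.Icc 0 1) s := fun s hs => by
    have hlog := ((hA s hs).1.hasFDerivWithinAt_opLog (hA s hs).2).restrictScalars ℝ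
    have hline : HasDerivWithinAt A ((c : ℂ) • 1 - T) (Set.Icc 0 1) s :=
      AffineMap.hasDerivWithinAt_lineMap
    exact (φ.hasFDerivAt.comp_hasDerivWithinAt s
      (hlog.comp_hasDerivWithinAt s hline hA)).const_mul c
  have hnonpos : ∀ s ∈ Set.Ioo (0 : ℝ) 1, c * φ (opLogDeriv (A s) ((c : ℂ) • 1 - T)) ≤ 0 := by
    intro s hs
    obtain ⟨hAs, hAu⟩ := hA s (Set.Ioo_subset_Icc_self hs)
    have hdir : (c : ℂ) • 1 - A s = ((1 - s : ℝ) : ℂ) • ((c : ℂ) • 1 - T) := by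
      simp only [A, AffineMap.lineMap_apply_module', Complex.coe_smul, sub_smul, one_smul]
      abel
    have hmul := hAs.mul_im_inner_opLogDeriv_nonpos hAu c f
    rw [hdir, map_smul, smul_apply, inner_smul_right, im_ofReal_mul, mul_left_comm] at hmul
    exact nonpos_of_mul_nonpos_right hmul (sub_pos.mpr hs.2)
  have hanti : AntitoneOn (fun s => c * φ (opLog (A s))) (Set.Icc 0 1) :=
    antitoneOn_of_hasDerivWithinAt_nonpos (convex_Icc 0 1)
      (fun s hs => (hderiv s hs).continuousWithinAt)
      (fun s hs => (hderiv s (interior_subset hs)).mono interior_subset)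
      (fun s hs => hnonpos s (by rwa [interior_Icc] at hs))
  simpa [A, φ] using hanti (Set.left_mem_Icc.mpr zero_le_one) (Set.right_mem_Icc.mpr zero_le_one)
    zero_le_one

namespace IsDissipative

variable {T : H →L[ℂ] H}

theorem im_inner_opLog_mem_Icc_of_coercive {ε : ℝ} (hε : 0 < ε)
    (hT : ∀ f, ε * ‖f‖ ^ 2 ≤ (⟪f, T f⟫_ℂ).im) (f : H) :
    (⟪f, opLog T f⟫_ℂ).im ∈ Set.Icc 0 (Real.pi * ‖f‖ ^ 2) := by
  constructor
  · simpa [opLog_one] using mul_im_inner_opLog_le hε hT one_ne_zero f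
  · have h := mul_im_inner_opLog_le hε hT (neg_ne_zero.mpr one_ne_zero) f
    rw [ofReal_neg, ofReal_one, neg_smul, one_smul, opLog_neg_one, im_inner_smul_one_apply,
      im_ofReal_mul, I_im, mul_one] at h
    linarith

theorem im_inner_opLog_mem_Icc (hT : IsDissipative T) (hu : IsUnit T) (f : H) :
    (⟪f, opLog T f⟫_ℂ).im ∈ Set.Icc 0 (Real.pi * ‖f‖ ^ 2) := by
  have hshift : Tendsto (fun ε : ℝ => T + (ε * I : ℂ) • 1) (𝓝[>] 0)
      (𝓝[{S | IsDissipative S ∧ IsUnit S}] T) := by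
    refine tendsto_nhdsWithin_iff.mpr ⟨?_, ?_⟩
    · refine tendsto_nhdsWithin_of_tendsto_nhds ?_
      have : Continuous fun ε : ℝ => T + (ε * I : ℂ) • (1 : H →L[ℂ] H) := by fun_prop
      simpa using this.tendsto 0
    · filter_upwards [self_mem_nhdsWithin] with ε hε
      have hε : 0 < (ε * I).im := by simpa using hε
      exact ⟨hT.add_smul_one hε.le, hT.isUnit_add_smul_one hε⟩
  have hlim : Tendsto (fun ε : ℝ => (⟪f, opLog (T + (ε * I : ℂ) • 1) f⟫_ℂ).im) (𝓝[>] 0)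
      (𝓝 (⟪f, opLog T f⟫_ℂ).im) := by
    have hlog := (hT.continuousWithinAt_opLog hu).tendsto.comp hshift
    exact (continuous_im.tendsto _).comp (tendsto_const_nhds.inner
      (((ContinuousLinearMap.apply ℂ H f).continuous.tendsto _).comp hlog))
  refine isClosed_Icc.mem_of_tendsto hlim ?_
  filter_upwards [self_mem_nhdsWithin] with ε hε
  refine im_inner_opLog_mem_Icc_of_coercive hε (fun f => ?_) f
  rw [im_inner_add_smul_one_apply]
  simpa using hT f

end IsDissipative

/-! ### The Schwarz integral formula -/

section Schwarz

variable {A : Type*} [NormedAddCommGroup A] [NormedSpace ℂ A] {F : ℂ → A} {c w : ℂ} {R : ℝ}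

theorem circleIntegrable_of_diffContOnCl (hR : 0 ≤ R) (hF : DiffContOnCl ℂ F (Metric.ball c R)) :
    CircleIntegrable F c R :=
  (hF.continuousOn_ball.mono Metric.sphere_subset_closedBall).circleIntegrable hR

theorem circleIntegrable_herglotzRieszKernel_smul (hw : w ∈ Metric.ball c R)
    (hF : CircleIntegrable F c R) :
    CircleIntegrable (fun ζ => herglotzRieszKernel c w ζ • F ζ) c R :=
  hF.continuousOn_smul (continuousOn_herglotzRieszKernel_sphere hw)

variable [CompleteSpace A]

theorem circleAverage_herglotzRieszKernel_smul (hF : DiffContOnCl ℂ F (Metric.ball c R))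
    (hw : w ∈ Metric.ball c R) :
    Real.circleAverage (fun ζ => herglotzRieszKernel c w ζ • F ζ) c R = (2 : ℂ) • F w - F c := by
  have hR : |R| = R := abs_of_pos (Metric.pos_of_mem_ball hw)
  have hint := circleIntegrable_of_diffContOnCl (Metric.pos_of_mem_ball hw).le hF
  have hkernel : Set.EqOn (fun ζ => herglotzRieszKernel c w ζ • F ζ)
      (fun ζ => (2 : ℂ) • (((ζ - c) / (ζ - w)) • F ζ) - F ζ) (Metric.sphere c |R|) := by
    intro ζ hζ
    have hne : ζ - w ≠ 0 := by
      rintro h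
      rw [← sub_eq_zero.mp h, Metric.mem_ball, Metric.mem_sphere.mp hζ, hR] at hw
      exact hw.false
    simp only [herglotzRieszKernel_def, smul_smul, sub_sub_sub_cancel_right]
    match_scalars
    field_simp
    ring
  have hdiv : CircleIntegrable (fun ζ => (2 : ℂ) • (((ζ - c) / (ζ - w)) • F ζ)) c R := by
    refine (hint.continuousOn_smul (ContinuousOn.div (by fun_prop) (by fun_prop)
      ?_)).fun_continuousOn_smul continuousOn_const
    grind [Metric.mem_sphere, Metric.mem_ball]
  rw [Real.circleAverage_congr_sphere hkernel, Real.circleAverage_fun_sub hdiv hint,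
    Real.circleAverage_fun_smul, DiffContOnCl.circleAverage_smul_div (hR.symm ▸ hF)
    (hR.symm ▸ hw), DiffContOnCl.circleAverage (hR.symm ▸ hF)]

/-- On the circle, the conjugate of the Herglotz–Riesz kernel is the boundary value of a function
analytic in the disc, so pairing with it evaluates an analytic function at the centre. -/
theorem circleAverage_conj_herglotzRieszKernel_smul (hF : DiffContOnCl ℂ F (Metric.ball c R))
    (hw : w ∈ Metric.ball c R) :
    Real.circleAverage (fun ζ => conj (herglotzRieszKernel c w ζ) • F ζ) c R = F c := by
  have hR := Metric.pos_of_mem_ball hw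
  have hint := circleIntegrable_herglotzRieszKernel_smul hw
    (circleIntegrable_of_diffContOnCl hR.le hF)
  have hre : CircleIntegrable ((2 : ℝ) • (re ∘ herglotzRieszKernel c w) • F) c R :=
    ((circleIntegrable_of_diffContOnCl hR.le hF).continuousOn_smul (continuous_re.comp_continuousOn
      (continuousOn_herglotzRieszKernel_sphere hw))).continuousOn_smul continuousOn_const
  have hconj : (fun ζ => conj (herglotzRieszKernel c w ζ) • F ζ) =
      (2 : ℝ) • ((re ∘ herglotzRieszKernel c w) • F) -
        fun ζ => herglotzRieszKernel c w ζ • F ζ := by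
    ext ζ
    have hre : conj (herglotzRieszKernel c w ζ) =
        (2 * (herglotzRieszKernel c w ζ).re : ℝ) - herglotzRieszKernel c w ζ := by
      rw [← add_conj, add_sub_cancel_left]
    simp only [hre, Pi.sub_apply, Pi.smul_apply, Pi.smul_apply', Function.comp_apply, sub_smul,
      coe_smul, mul_smul]
  rw [hconj, Real.circleAverage_sub hre hint, Real.circleAverage_smul,
    hF.circleAverage_re_herglotzRieszKernel_smul hw, circleAverage_herglotzRieszKernel_smul hF hw]
  module

variable [StarAddMonoid A] [NormedStarGroup A] [StarModule ℂ A]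

theorem circleAverage_herglotzRieszKernel_smul_star (hF : DiffContOnCl ℂ F (Metric.ball c R))
    (hw : w ∈ Metric.ball c R) :
    Real.circleAverage (fun ζ => herglotzRieszKernel c w ζ • star (F ζ)) c R = star (F c) := by
  have hR := (Metric.pos_of_mem_ball hw).le
  have hint := (circleIntegrable_of_diffContOnCl hR hF).continuousOn_smul
    (continuous_conj.comp_continuousOn (continuousOn_herglotzRieszKernel_sphere hw))
  rw [← circleAverage_conj_herglotzRieszKernel_smul hF hw]
  refine Eq.trans ?_ ((starL' ℝ : A ≃L[ℝ] A).toContinuousLinearMap.circleAverage_comp_comm hint)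
  simp [Function.comp_def]

theorem circleAverage_herglotzRieszKernel_smul_imaginaryPart
    (hF : DiffContOnCl ℂ F (Metric.ball c R)) (hw : w ∈ Metric.ball c R) :
    I • Real.circleAverage (fun ζ => herglotzRieszKernel c w ζ • (ℑ (F ζ) : A)) c R =
      F w - ℜ (F c) := by
  have hint := circleIntegrable_of_diffContOnCl (Metric.pos_of_mem_ball hw).le hF
  have hstar : CircleIntegrable (fun ζ => star (F ζ)) c R :=
    (continuous_star.comp_continuousOn (hF.continuousOn_ball.mono
      Metric.sphere_subset_closedBall)).circleIntegrable (Metric.pos_of_mem_ball hw).le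
  have hkernel : (fun ζ => I • herglotzRieszKernel c w ζ • (ℑ (F ζ) : A)) = (2⁻¹ : ℝ) •
      ((fun ζ => herglotzRieszKernel c w ζ • F ζ) -
        fun ζ => herglotzRieszKernel c w ζ • star (F ζ)) := by
    ext ζ
    simp only [imaginaryPart_apply_coe, Pi.smul_apply, Pi.sub_apply, ← coe_smul]
    match_scalars <;> simp [← mul_assoc, mul_comm]
  rw [← Real.circleAverage_fun_smul, hkernel, Real.circleAverage_smul, Real.circleAverage_sub
    (circleIntegrable_herglotzRieszKernel_smul hw hint)
    (circleIntegrable_herglotzRieszKernel_smul hw hstar),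
    circleAverage_herglotzRieszKernel_smul hF hw,
    circleAverage_herglotzRieszKernel_smul_star hF hw, realPart_apply_coe]
  module

end Schwarz

/-! ### Weak limits of operator-valued functions -/

section WeakLimits

variable {ι : Type*} (U : Ultrafilter ι)

theorem exists_tendsto_inner_of_norm_le {v : ι → H} {R : ℝ} (hv : ∀ i, ‖v i‖ ≤ R) :
    ∃ x : H, ‖x‖ ≤ R ∧ ∀ y : H, Tendsto (fun i => ⟪y, v i⟫_ℂ) U (𝓝 ⟪y, x⟫_ℂ) := by
  let w : ι → WeakDual ℂ H := fun i =>
    StrongDual.toWeakDual (InnerProductSpace.toDual ℂ H (v i))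
  have hw : ∀ᶠ i in U, w i ∈ WeakDual.toStrongDual ⁻¹' Metric.closedBall 0 R :=
    Eventually.of_forall fun i => by simpa [w] using hv i
  obtain ⟨ψ, hψR, hψ⟩ := (WeakDual.isCompact_closedBall (𝕜 := ℂ) (E := H) 0 R).ultrafilter_le_nhds
    (U.map w) (le_principal_iff.mpr hw)
  refine ⟨(InnerProductSpace.toDual ℂ H).symm (WeakDual.toStrongDual ψ), by simpa using hψR,
    fun y => ?_⟩
  have hψy : Tendsto (fun i => ⟪v i, y⟫_ℂ) U (𝓝 (ψ y)) :=
    ((WeakDual.eval_continuous y).tendsto ψ).comp hψ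
  have hinner : ⟪y, (InnerProductSpace.toDual ℂ H).symm (WeakDual.toStrongDual ψ)⟫_ℂ =
      conj (ψ y) := by
    rw [← inner_conj_symm, InnerProductSpace.toDual_symm_apply]
    rfl
  simpa only [hinner, Function.comp_def, inner_conj_symm] using (continuous_conj.tendsto _).comp hψy

theorem exists_tendsto_inner_apply {X : ι → E →L[ℂ] H} {R : ℝ} (hX : ∀ i, ‖X i‖ ≤ R) :
    ∃ T : E →L[ℂ] H, ∀ f g, Tendsto (fun i => ⟪f, X i g⟫_ℂ) U (𝓝 ⟪f, T g⟫_ℂ) := by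
  choose T hTnorm hT using fun g : E =>
    exists_tendsto_inner_of_norm_le U fun i => (X i).le_of_opNorm_le (hX i) g
  refine ⟨LinearMap.mkContinuous ⟨⟨T, fun g₁ g₂ => ?_⟩, fun a g => ?_⟩ R hTnorm,
    fun f g => hT g f⟩
  · refine ext_inner_left ℂ fun f => tendsto_nhds_unique (hT (g₁ + g₂) f) ?_
    simpa only [map_add, inner_add_right] using (hT g₁ f).add (hT g₂ f)
  · refine ext_inner_left ℂ fun f => tendsto_nhds_unique (hT (a • g) f) ?_
    simpa only [map_smul, RingHom.id_apply, inner_smul_right] using (hT g f).const_mul a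

open scoped ComplexOrder in
theorem nonneg_iff_forall_inner_nonneg {T : E →L[ℂ] E} : 0 ≤ T ↔ ∀ f, 0 ≤ ⟪f, T f⟫_ℂ := by
  refine ⟨fun hT => ((nonneg_iff_isPositive T).mp hT).inner_nonneg_right, fun hT => ?_⟩
  refine (nonneg_iff_isPositive T).mpr ((isPositive_iff_complex T).mpr fun f => ?_)
  obtain ⟨hre, him⟩ := Complex.nonneg_iff.mp (hT f)
  have hsymm : ⟪T f, f⟫_ℂ = ⟪f, T f⟫_ℂ := by
    rw [← inner_conj_symm, conj_eq_iff_im.mpr him.symm]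
  exact hsymm ▸ ⟨conj_eq_iff_re.mp (conj_eq_iff_im.mpr him.symm), hre⟩

theorem nonneg_of_tendsto_inner {l : Filter ι} [l.NeBot] {X : ι → E →L[ℂ] E} {T : E →L[ℂ] E}
    (hX : ∀ i, 0 ≤ X i) (hT : ∀ f g, Tendsto (fun i => ⟪f, X i g⟫_ℂ) l (𝓝 ⟪f, T g⟫_ℂ)) :
    0 ≤ T := by
  open scoped ComplexOrder in
  exact nonneg_iff_forall_inner_nonneg.mpr fun f => ge_of_tendsto (hT f f)
    (Eventually.of_forall fun i => nonneg_iff_forall_inner_nonneg.mp (hX i) f)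

theorem mem_Icc_of_tendsto_inner {l : Filter ι} [l.NeBot] {X : ι → H →L[ℂ] H}
    {S T R : H →L[ℂ] H} (hX : ∀ i, X i ∈ Set.Icc S R)
    (hT : ∀ f g, Tendsto (fun i => ⟪f, X i g⟫_ℂ) l (𝓝 ⟪f, T g⟫_ℂ)) : T ∈ Set.Icc S R := by
  constructor
  · refine sub_nonneg.mp
      (nonneg_of_tendsto_inner (l := l) (fun i => sub_nonneg.mpr (hX i).1) fun f g => ?_)
    simpa only [sub_apply, inner_sub_right] using (hT f g).sub_const ⟪f, S g⟫_ℂ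
  · refine sub_nonneg.mp
      (nonneg_of_tendsto_inner (l := l) (fun i => sub_nonneg.mpr (hX i).2) fun f g => ?_)
    simpa only [sub_apply, inner_sub_right] using (hT f g).const_sub ⟪f, R g⟫_ℂ

theorem norm_le_one_of_mem_Icc {T : H →L[ℂ] H} (hT : T ∈ Set.Icc 0 1) : ‖T‖ ≤ 1 :=
  (CStarAlgebra.norm_le_one_iff_of_nonneg T hT.1).mpr hT.2

theorem exists_mem_Icc_tendsto_inner_apply {X : ι → H →L[ℂ] H} (hX : ∀ i, X i ∈ Set.Icc 0 1) :
    ∃ T ∈ Set.Icc (0 : H →L[ℂ] H) 1,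
      ∀ f g, Tendsto (fun i => ⟪f, X i g⟫_ℂ) U (𝓝 ⟪f, T g⟫_ℂ) := by
  obtain ⟨T, hT⟩ := exists_tendsto_inner_apply U fun i => norm_le_one_of_mem_Icc (hX i)
  exact ⟨T, mem_Icc_of_tendsto_inner hX hT, hT⟩

variable {α : Type*} [MeasurableSpace α] {μ : Measure α}

theorem setAverage_mem_Icc_zero_one [IsFiniteMeasure μ] {X : α → H →L[ℂ] H}
    (hXm : AEStronglyMeasurable X μ) (hX : ∀ x, X x ∈ Set.Icc 0 1) (s : Set α) :
    ⨍ x in s, X x ∂μ ∈ Set.Icc (0 : H →L[ℂ] H) 1 := by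
  rcases eq_or_ne (μ s) 0 with hs | hs
  · simp [Measure.restrict_eq_zero.mpr hs]
  · exact (convex_Icc 0 1).set_average_mem isClosed_Icc hs (measure_ne_top μ s)
      (Eventually.of_forall hX) (Integrable.of_bound hXm.restrict 1
        (Eventually.of_forall fun x => norm_le_one_of_mem_Icc (hX x)))

theorem exists_tendsto_integral_inner [IsFiniteMeasure μ] {u : ι → α → H} {R : ℝ}
    (hu : ∀ i, AEStronglyMeasurable (u i) μ) (hR : ∀ i x, ‖u i x‖ ≤ R) :
    ∃ ξ : α → H, MemLp ξ 2 μ ∧ ∀ h : α → H, MemLp h 2 μ →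
      Tendsto (fun i => ∫ x, ⟪h x, u i x⟫_ℂ ∂μ) U (𝓝 (∫ x, ⟪h x, ξ x⟫_ℂ ∂μ)) := by
  have hmem : ∀ i, MemLp (u i) 2 μ := fun i =>
    MemLp.of_bound (hu i) R (Eventually.of_forall (hR i))
  obtain ⟨ξ, -, hξ⟩ := exists_tendsto_inner_of_norm_le U
      (v := fun i => (hmem i).toLp (u i)) fun i => by
    have hbound : ∀ᵐ x ∂μ, ‖(hmem i).toLp (u i) x‖ ≤ max R 0 := by
      filter_upwards [(hmem i).coeFn_toLp] with x hx
      exact hx ▸ (hR i x).trans (le_max_left R 0)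
    exact Lp.norm_le_of_ae_bound (le_max_right R 0) hbound
  refine ⟨ξ, Lp.memLp ξ, fun h hh => ?_⟩
  have hcongr : ∀ {v : α → H} (hv : MemLp v 2 μ),
      ⟪hh.toLp h, hv.toLp v⟫_ℂ = ∫ x, ⟪h x, v x⟫_ℂ ∂μ := fun hv => by
    rw [L2.inner_def]
    refine integral_congr_ae ?_
    filter_upwards [hh.coeFn_toLp, hv.coeFn_toLp] with x hhx hvx
    rw [hhx, hvx]
  simpa only [← hcongr (hmem _), ← hcongr (Lp.memLp ξ), Lp.toLp_coeFn] using hξ (hh.toLp h)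

theorem integral_inner_indicator_const [IsFiniteMeasure μ] {s : Set α} (hs : MeasurableSet s)
    {v : α → H} (hv : Integrable v μ) (f : H) :
    ∫ x, ⟪s.indicator (fun _ => (μ.real s)⁻¹ • f) x, v x⟫_ℂ ∂μ = ⟪f, ⨍ x in s, v x ∂μ⟫_ℂ := by
  have hind : ∀ x, ⟪s.indicator (fun _ => (μ.real s)⁻¹ • f) x, v x⟫_ℂ =
      s.indicator (fun x => ⟪f, (μ.real s)⁻¹ • v x⟫_ℂ) x := fun x => by
    by_cases hx : x ∈ s <;> simp [hx]
  simp_rw [hind, integral_indicator hs, setAverage_eq, ← integral_smul]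
  exact integral_inner (hv.restrict.smul _) f

theorem exists_mem_Icc_apply_eq_setAverage [IsFiniteMeasure μ] {X : ι → α → H →L[ℂ] H}
    (hXm : ∀ i, AEStronglyMeasurable (X i) μ) (hX : ∀ i x, X i x ∈ Set.Icc 0 1)
    {ξ : H → α → H} (hξ : ∀ g, Integrable (ξ g) μ)
    (hlim : ∀ g (h : α → H), MemLp h 2 μ →
      Tendsto (fun i => ∫ x, ⟪h x, X i x g⟫_ℂ ∂μ) U (𝓝 (∫ x, ⟪h x, ξ g x⟫_ℂ ∂μ)))
    {s : Set α} (hs : MeasurableSet s) :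
    ∃ T ∈ Set.Icc (0 : H →L[ℂ] H) 1, ∀ g, T g = ⨍ x in s, ξ g x ∂μ := by
  obtain ⟨T, hT, hTlim⟩ := exists_mem_Icc_tendsto_inner_apply U fun i =>
    setAverage_mem_Icc_zero_one (hXm i) (hX i) s
  refine ⟨T, hT, fun g => ext_inner_left ℂ fun f => tendsto_nhds_unique (hTlim f g) ?_⟩
  have hXint : ∀ i, Integrable (X i) μ := fun i => Integrable.of_bound (hXm i) 1
    (Eventually.of_forall fun x => norm_le_one_of_mem_Icc (hX i x))
  have hmean : ∀ i, ⟪f, (⨍ x in s, X i x ∂μ) g⟫_ℂ =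
      ∫ x, ⟪s.indicator (fun _ => (μ.real s)⁻¹ • f) x, X i x g⟫_ℂ ∂μ := fun i => by
    rw [integral_inner_indicator_const hs ((hXint i).apply_continuousLinearMap g), setAverage_eq,
      setAverage_eq, smul_apply, ContinuousLinearMap.integral_apply (hXint i).restrict]
  simp_rw [hmean, ← integral_inner_indicator_const hs (hξ g)]
  exact hlim g _ ((memLp_const _).indicator hs)

theorem exists_mem_Icc_ae_apply_eq_of_setAverage {α : Type*} [MetricSpace α]
    [SecondCountableTopology α] [HasBesicovitchCovering α] [MeasurableSpace α] [BorelSpace α]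
    {μ : Measure α} [IsLocallyFiniteMeasure μ] {Γ : Set α → H →L[ℂ] H} {ξ : H → α → H}
    (hξ : ∀ g, LocallyIntegrable (ξ g) μ)
    (hΓ : ∀ s, MeasurableSet s → Γ s ∈ Set.Icc 0 1 ∧ ∀ g, Γ s g = ⨍ x in s, ξ g x ∂μ) :
    ∃ Ξ : α → H →L[ℂ] H, (∀ x, Ξ x ∈ Set.Icc 0 1) ∧ ∀ g, ∀ᵐ x ∂μ, Ξ x g = ξ g x := by
  let U : Ultrafilter ℝ := Ultrafilter.of (𝓝[>] 0)
  choose Ξ hΞ hΞlim using fun x => exists_mem_Icc_tendsto_inner_apply U fun r =>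
    (hΓ (Metric.closedBall x r) Metric.isClosed_closedBall.measurableSet).1
  refine ⟨Ξ, hΞ, fun g => ?_⟩
  filter_upwards [(Besicovitch.vitaliFamily μ).ae_tendsto_average (hξ g)] with x hx
  refine ext_inner_left ℂ fun f => tendsto_nhds_unique (hΞlim x f g) ?_
  have hball : Tendsto (fun r => ⨍ y in Metric.closedBall x r, ξ g y ∂μ) U (𝓝 (ξ g x)) :=
    (hx.comp (Besicovitch.tendsto_filterAt μ x)).mono_left (Ultrafilter.of_le _)
  simp_rw [(hΓ _ Metric.isClosed_closedBall.measurableSet).2 g]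
  exact tendsto_const_nhds.inner hball

theorem exists_measurableSet_stronglyMeasurable_indicator_apply {𝕜 V W : Type*}
    [NontriviallyNormedField 𝕜] [SeminormedAddCommGroup V] [NormedSpace 𝕜 V] [SeparableSpace V]
    [NormedAddCommGroup W] [NormedSpace 𝕜 W] {Ξ : α → V →L[𝕜] W}
    (hΞ : ∀ g, AEStronglyMeasurable (fun x => Ξ x g) μ) :
    ∃ s ∈ ae μ, ∀ g, StronglyMeasurable fun x => s.indicator Ξ x g := by
  let t : ℕ → Set α := fun n => {x | Ξ x (denseSeq V n) ≠ (hΞ (denseSeq V n)).mk _ x}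
  have ht : μ (⋃ n, t n) = 0 := measure_iUnion_null fun n => (hΞ (denseSeq V n)).ae_eq_mk
  obtain ⟨u, htu, hum, hu⟩ := exists_measurable_superset_of_null ht
  have hdense : ∀ n, StronglyMeasurable fun x => uᶜ.indicator Ξ x (denseSeq V n) := fun n => by
    have hmk : (fun x => uᶜ.indicator Ξ x (denseSeq V n)) =
        uᶜ.indicator ((hΞ (denseSeq V n)).mk _) := by
      ext x
      by_cases hx : x ∈ u
      · simp [hx]
      · have hxt : x ∉ t n := fun h => hx (htu (Set.mem_iUnion_of_mem n h))
        simpa [hx, t] using hxt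
    exact hmk ▸ (hΞ (denseSeq V n)).stronglyMeasurable_mk.indicator hum.compl
  refine ⟨uᶜ, compl_mem_ae_iff.mpr hu, fun g => ?_⟩
  have : (comap (denseSeq V) (𝓝 g)).NeBot := comap_neBot_iff_frequently.mpr
    (mem_closure_iff_frequently.mp (denseRange_denseSeq V g))
  refine stronglyMeasurable_of_tendsto (comap (denseSeq V) (𝓝 g)) hdense ?_
  exact tendsto_pi_nhds.mpr fun x =>
    ((uᶜ.indicator Ξ x).continuous.tendsto g).comp tendsto_comap

theorem exists_mem_Icc_tendsto_integral_inner_apply {α : Type*} [MetricSpace α]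
    [SecondCountableTopology α] [HasBesicovitchCovering α] [MeasurableSpace α] [BorelSpace α]
    {μ : Measure α} [IsFiniteMeasure μ] [SeparableSpace H] {X : ι → α → H →L[ℂ] H}
    (hXm : ∀ i, AEStronglyMeasurable (X i) μ) (hX : ∀ i x, X i x ∈ Set.Icc 0 1) :
    ∃ Ξ : α → H →L[ℂ] H, (∀ x, Ξ x ∈ Set.Icc 0 1) ∧ (∀ g, StronglyMeasurable fun x => Ξ x g) ∧
      ∀ g (h : α → H), MemLp h 2 μ →
        Tendsto (fun i => ∫ x, ⟪h x, X i x g⟫_ℂ ∂μ) U (𝓝 (∫ x, ⟪h x, Ξ x g⟫_ℂ ∂μ)) := by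
  choose ξ hξ hlim using fun g => exists_tendsto_integral_inner (μ := μ) U (R := ‖g‖)
    (fun i => (hXm i).apply_continuousLinearMap g)
    fun i x => by simpa using (X i x).le_of_opNorm_le (norm_le_one_of_mem_Icc (hX i x)) g
  have hξint : ∀ g, Integrable (ξ g) μ := fun g => (hξ g).integrable one_le_two
  choose! Γ hΓ using fun s (hs : MeasurableSet s) =>
    exists_mem_Icc_apply_eq_setAverage U hXm hX hξint hlim hs
  obtain ⟨Ξ, hΞ, hΞξ⟩ := exists_mem_Icc_ae_apply_eq_of_setAverage
    (fun g => (hξint g).locallyIntegrable) hΓ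
  obtain ⟨s, hs, hsm⟩ := exists_measurableSet_stronglyMeasurable_indicator_apply (μ := μ)
    fun g => (hξ g).1.congr ((hΞξ g).mono fun _ hx => hx.symm)
  refine ⟨s.indicator Ξ, fun x => ?_, hsm, fun g h hh => ?_⟩
  · by_cases hx : x ∈ s
    · simpa [hx] using hΞ x
    · simp [hx]
  · have heq : ∫ x, ⟪h x, s.indicator Ξ x g⟫_ℂ ∂μ = ∫ x, ⟪h x, ξ g x⟫_ℂ ∂μ := by
      refine integral_congr_ae ?_
      filter_upwards [hs, hΞξ g] with x hxs hx
      rw [Set.indicator_of_mem hxs, hx]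
    exact heq ▸ hlim g h hh

end WeakLimits

/-! ### The Cauchy distribution and the Cayley transform of the real line -/

section Cauchy

open ProbabilityTheory

theorem ofReal_sub_ne_zero {z : ℂ} (hz : z.im ≠ 0) (l : ℝ) : (l : ℂ) - z ≠ 0 := fun h =>
  hz (by simpa using congrArg im h)

theorem cayley_I_tan {θ : ℝ} (hθ : Real.cos θ ≠ 0) :
    cayley I (Real.tan θ) = circleMap 0 1 (2 * θ + Real.pi) := by
  have hcos : (Real.cos θ : ℂ) ≠ 0 := mod_cast hθ
  have hnum : (Real.sin θ : ℂ) - I * Real.cos θ = -I * exp (θ * I) := by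
    rw [exp_mul_I, ofReal_sin, ofReal_cos]
    linear_combination sin θ * I_sq
  have hden : (Real.sin θ : ℂ) + I * Real.cos θ = I * exp (-(θ * I)) := by
    rw [← neg_mul, exp_mul_I, Complex.cos_neg, Complex.sin_neg, ofReal_sin, ofReal_cos]
    linear_combination sin θ * I_sq
  calc cayley I (Real.tan θ)
      = (Real.sin θ - I * Real.cos θ) / (Real.sin θ + I * Real.cos θ) := by
        rw [cayley, conj_I, sub_neg_eq_add, Real.tan_eq_sin_div_cos, ofReal_div]
        field_simp
    _ = -(exp (θ * I) * exp (θ * I)) := by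
        rw [hnum, hden, exp_neg]
        field_simp
    _ = circleMap 0 1 (2 * θ + Real.pi) := by
        rw [circleMap_zero, ofReal_one, one_mul, ← exp_add, ← mul_neg_one, ← exp_pi_mul_I,
          ← exp_add]
        push_cast
        ring_nf

theorem cayley_I_ofReal (l : ℝ) :
    cayley I l = circleMap 0 1 (2 * Real.arctan l + Real.pi) := by
  simpa only [Real.tan_arctan] using cayley_I_tan (Real.cos_arctan_pos l).ne'

theorem norm_cayley_I_ofReal (l : ℝ) : ‖cayley I l‖ = 1 := by
  simp [cayley_I_ofReal, norm_circleMap_zero]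

theorem continuous_cayley_I_ofReal : Continuous fun l : ℝ => cayley I l := by
  simp only [cayley_I_ofReal]
  fun_prop

variable {A : Type*} [NormedAddCommGroup A] [NormedSpace ℝ A]

theorem cauchyMeasure_zero_one :
    cauchyMeasure 0 1 =
      volume.withDensity fun l => ENNReal.ofReal (Real.pi⁻¹ * (1 + l ^ 2)⁻¹) := by
  rw [cauchyMeasure_of_scale_ne_zero 0 one_ne_zero]
  congr! 2 with l
  simp [cauchyPDF_def, cauchyPDFReal_def, add_comm]

theorem integral_cauchyMeasure (φ : ℝ → A) :
    ∫ l, φ l ∂cauchyMeasure 0 1 = ∫ l, (Real.pi⁻¹ * (1 + l ^ 2)⁻¹) • φ l := by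
  rw [cauchyMeasure_zero_one, integral_withDensity_eq_integral_toReal_smul (by fun_prop)
    (Eventually.of_forall fun _ => ENNReal.ofReal_lt_top)]
  congr! 3
  exact ENNReal.toReal_ofReal (by positivity)

theorem integrable_cauchyMeasure_iff {φ : ℝ → A} :
    Integrable φ (cauchyMeasure 0 1) ↔
      Integrable fun l => (Real.pi⁻¹ * (1 + l ^ 2)⁻¹) • φ l := by
  rw [cauchyMeasure_zero_one, integrable_withDensity_iff_integrable_smul' (by fun_prop)
    (Eventually.of_forall fun _ => ENNReal.ofReal_lt_top)]
  congr! 3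
  exact ENNReal.toReal_ofReal (by positivity)

theorem integral_comp_cayley_cauchyMeasure (φ : ℂ → A) :
    ∫ l : ℝ, φ (cayley I l) ∂cauchyMeasure 0 1 = Real.circleAverage φ 0 1 := by
  have habs (x : ℝ) : |(1 + x ^ 2)⁻¹| = (1 + x ^ 2)⁻¹ := abs_of_pos (by positivity)
  have himage := integral_image_eq_integral_abs_deriv_smul MeasurableSet.univ
    (fun x _ => (Real.hasDerivAt_arctan' x).hasDerivWithinAt) Real.arctan_injective.injOn
    fun θ => φ (circleMap 0 1 (2 * θ + Real.pi))
  rw [Set.image_univ, Real.range_arctan, setIntegral_univ] at himage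
  simp_rw [habs] at himage
  simp_rw [integral_cauchyMeasure, mul_smul, integral_smul, cayley_I_ofReal]
  rw [← himage, ← integral_Ioc_eq_integral_Ioo,
    ← intervalIntegral.integral_of_le (by linarith [Real.pi_pos]),
    intervalIntegral.integral_comp_mul_add (fun θ => φ (circleMap 0 1 θ)) two_ne_zero,
    Real.circleAverage_def, smul_smul, ← mul_inv_rev]
  ring_nf

end Cauchy

/-! ### The Nevanlinna representation of operator functions with bounded imaginary part -/

/-- The Nevanlinna kernel `(1 + λz)/(λ - z)`: the kernel of the Herglotz representation when the
representing measure is normalised against the Cauchy distribution. -/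
def nevanlinnaKernel (z : ℂ) (l : ℝ) : ℂ :=
  (1 + l * z) / (l - z)

section Nevanlinna

open ProbabilityTheory

variable {z : ℂ}

theorem continuous_nevanlinnaKernel (hz : z.im ≠ 0) : Continuous (nevanlinnaKernel z) :=
  Continuous.div (by fun_prop) (by fun_prop) (ofReal_sub_ne_zero hz)

theorem norm_nevanlinnaKernel_le (hz : z.im ≠ 0) (l : ℝ) :
    ‖nevanlinnaKernel z l‖ ≤ ‖z‖ + ‖1 + z ^ 2‖ / |z.im| := by
  have hne := ofReal_sub_ne_zero hz l
  have him : |z.im| ≤ ‖(l : ℂ) - z‖ := by simpa using abs_im_le_norm ((l : ℂ) - z)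
  calc ‖nevanlinnaKernel z l‖ = ‖z + (1 + z ^ 2) / (l - z)‖ := by
        rw [nevanlinnaKernel]
        congr 1
        field_simp
        ring
    _ ≤ ‖z‖ + ‖1 + z ^ 2‖ / ‖(l : ℂ) - z‖ := by
        rw [← norm_div]
        exact norm_add_le _ _
    _ ≤ ‖z‖ + ‖1 + z ^ 2‖ / |z.im| := by gcongr

theorem memLp_nevanlinnaKernel (hz : z.im ≠ 0) {p : ENNReal} :
    MemLp (nevanlinnaKernel z) p (cauchyMeasure 0 1) :=
  .of_bound (continuous_nevanlinnaKernel hz).aestronglyMeasurable _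
    (.of_forall (norm_nevanlinnaKernel_le hz))

theorem nevanlinnaKernel_eq_mul_sub (hz : z.im ≠ 0) (l : ℝ) :
    (1 + (l : ℂ) ^ 2)⁻¹ * nevanlinnaKernel z l =
      ((l : ℂ) - z)⁻¹ - (l : ℂ) * (1 + (l : ℂ) ^ 2)⁻¹ := by
  have hne := ofReal_sub_ne_zero hz l
  have hsq : (1 : ℂ) + (l : ℂ) ^ 2 ≠ 0 := mod_cast (by positivity : 1 + l ^ 2 ≠ 0)
  rw [nevanlinnaKernel]
  field_simp
  ring

theorem nevanlinnaKernel_eq_herglotzRieszKernel (hz : 0 < z.im) (l : ℝ) :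
    nevanlinnaKernel z l = I * herglotzRieszKernel 0 (cayley I z) (cayley I l) := by
  have hl : (l : ℂ) + I ≠ 0 := by simpa using ofReal_sub_ne_zero (z := -I) (by simp) l
  have hzI : z + I ≠ 0 := by simpa using sub_conj_ne_zero (w := I) (by simp) hz
  have hne := ofReal_sub_ne_zero hz.ne' l
  have hadd : cayley I l + cayley I z = 2 * (1 + l * z) / ((l + I) * (z + I)) := by
    simp only [cayley, conj_I, sub_neg_eq_add]
    field_simp
    linear_combination (-2) * I_sq
  have hsub : cayley I l - cayley I z = 2 * I * (l - z) / ((l + I) * (z + I)) := by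
    simp only [cayley, conj_I, sub_neg_eq_add]
    field_simp
    ring
  simp only [herglotzRieszKernel_def, sub_zero, hadd, hsub, nevanlinnaKernel]
  field_simp

theorem integral_nevanlinnaKernel_smul_imaginaryPart {A : Type*} [NormedAddCommGroup A]
    [NormedSpace ℂ A] [CompleteSpace A] [StarAddMonoid A] [NormedStarGroup A] [StarModule ℂ A]
    {F : ℂ → A} (hF : DiffContOnCl ℂ F (Metric.ball 0 1)) (hz : 0 < z.im) :
    ∫ l : ℝ, nevanlinnaKernel z l • (ℑ (F (cayley I l)) : A) ∂cauchyMeasure 0 1 =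
      F (cayley I z) - ℜ (F 0) := by
  have hω : cayley I z ∈ Metric.ball 0 1 := by simpa using norm_cayley_lt_one (by simp) hz
  simp_rw [nevanlinnaKernel_eq_herglotzRieszKernel hz, mul_smul, integral_smul]
  rw [integral_comp_cayley_cauchyMeasure
      fun ζ => herglotzRieszKernel 0 (cayley I z) ζ • (ℑ (F ζ) : A),
    circleAverage_herglotzRieszKernel_smul_imaginaryPart hF hω]

theorem cauchyPDF_smul_nevanlinnaKernel_mul (hz : z.im ≠ 0) (l : ℝ) (a : ℂ) :
    (Real.pi⁻¹ * (1 + l ^ 2)⁻¹) • (nevanlinnaKernel z l * a) =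
      Real.pi⁻¹ • ((((l : ℂ) - z)⁻¹ - l * (1 + (l : ℂ) ^ 2)⁻¹) * a) := by
  rw [← nevanlinnaKernel_eq_mul_sub hz, real_smul, real_smul]
  push_cast
  ring

theorem pi_mul_integral_nevanlinnaKernel_mul (hz : z.im ≠ 0) (φ : ℝ → ℂ) :
    Real.pi * ∫ l, nevanlinnaKernel z l * φ l ∂cauchyMeasure 0 1 =
      ∫ l : ℝ, (((l : ℂ) - z)⁻¹ - l * (1 + (l : ℂ) ^ 2)⁻¹) * φ l := by
  simp_rw [integral_cauchyMeasure, cauchyPDF_smul_nevanlinnaKernel_mul hz, integral_smul]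
  rw [← real_smul, smul_inv_smul₀ Real.pi_ne_zero]

theorem integrable_nevanlinnaKernel_mul_iff (hz : z.im ≠ 0) {φ : ℝ → ℂ} :
    Integrable (fun l => nevanlinnaKernel z l * φ l) (cauchyMeasure 0 1) ↔
      Integrable fun l : ℝ => (((l : ℂ) - z)⁻¹ - l * (1 + (l : ℂ) ^ 2)⁻¹) * φ l := by
  simp_rw [integrable_cauchyMeasure_iff, cauchyPDF_smul_nevanlinnaKernel_mul hz]
  exact integrable_smul_iff (inv_ne_zero Real.pi_ne_zero) _

theorem integrable_nevanlinnaKernel_smul_comp_cayley {A : Type*} [NormedAddCommGroup A]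
    [NormedSpace ℂ A] {φ : ℂ → A} (hφ : ContinuousOn φ (Metric.sphere 0 1)) (hz : z.im ≠ 0) :
    Integrable (fun l : ℝ => nevanlinnaKernel z l • φ (cayley I l)) (cauchyMeasure 0 1) := by
  have hmem (l : ℝ) : cayley I l ∈ Metric.sphere 0 1 := by simp [norm_cayley_I_ofReal]
  obtain ⟨B, hB⟩ := (isCompact_sphere (0 : ℂ) 1).exists_bound_of_continuousOn hφ
  have hcont : Continuous fun l : ℝ => φ (cayley I l) :=
    hφ.comp_continuous continuous_cayley_I_ofReal hmem
  have hint : Integrable (fun l : ℝ => φ (cayley I l)) (cauchyMeasure 0 1) :=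
    .of_bound hcont.aestronglyMeasurable B (.of_forall fun l => hB _ (hmem l))
  exact hint.bdd_smul _ (continuous_nevanlinnaKernel hz).aestronglyMeasurable
    (.of_forall (norm_nevanlinnaKernel_le hz))

theorem continuous_imaginaryPart {A : Type*} [NormedAddCommGroup A] [NormedSpace ℂ A]
    [StarAddMonoid A] [NormedStarGroup A] [StarModule ℂ A] :
    Continuous fun a : A => (ℑ a : A) := by
  simp only [imaginaryPart_apply_coe]
  fun_prop

theorem inner_eq_inner_realPart_add_integral {F : ℂ → H →L[ℂ] H}
    (hF : DiffContOnCl ℂ F (Metric.ball 0 1)) (hz : 0 < z.im) (f g : H) :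
    ⟪f, F (cayley I z) g⟫_ℂ = ⟪f, (ℜ (F 0) : H →L[ℂ] H) g⟫_ℂ + ∫ l : ℝ,
      nevanlinnaKernel z l * ⟪f, (ℑ (F (cayley I l)) : H →L[ℂ] H) g⟫_ℂ ∂cauchyMeasure 0 1 := by
  have him : ContinuousOn (fun ζ => (ℑ (F ζ) : H →L[ℂ] H)) (Metric.sphere 0 1) :=
    continuous_imaginaryPart.comp_continuousOn
      (hF.continuousOn_ball.mono Metric.sphere_subset_closedBall)
  have hint := integrable_nevanlinnaKernel_smul_comp_cayley him hz.ne'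
  have happly := congrArg (fun T : H →L[ℂ] H => ⟪f, T g⟫_ℂ)
    (integral_nevanlinnaKernel_smul_imaginaryPart hF hz)
  rw [ContinuousLinearMap.integral_apply hint,
    ← integral_inner (hint.apply_continuousLinearMap g)] at happly
  simp only [smul_apply, inner_smul_right, sub_apply, inner_sub_right] at happly
  rw [happly, add_sub_cancel]

theorem diffContOnCl_comp_ofReal_mul {A : Type*} [NormedAddCommGroup A] [NormedSpace ℂ A]
    {F : ℂ → A} (hF : DifferentiableOn ℂ F (Metric.ball 0 1)) {r : ℝ} (hr : |r| < 1) :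
    DiffContOnCl ℂ (fun ω => F (r * ω)) (Metric.ball 0 1) := by
  refine DifferentiableOn.diffContOnCl (hF.comp (by fun_prop) fun ω hω => ?_)
  rw [closure_ball _ one_ne_zero, mem_closedBall_zero_iff] at hω
  simpa using (mul_le_of_le_one_right (abs_nonneg r) hω).trans_lt hr

theorem tendsto_comp_invCayley_mul_cayley {A : Type*} [NormedAddCommGroup A] [NormedSpace ℂ A]
    {L : ℂ → A} (hL : DifferentiableOn ℂ L {z | 0 < z.im}) {w : ℂ} (hw : 0 < w.im) (hz : 0 < z.im)
    {ι : Type*} {l : Filter ι} {r : ι → ℝ} (hr : Tendsto r l (𝓝 1)) :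
    Tendsto (fun i => L (invCayley w (r i * cayley w z))) l (𝓝 (L z)) := by
  have hzdisc : cayley w z ∈ Metric.ball (0 : ℂ) 1 := by simpa using norm_cayley_lt_one hw hz
  have hcont : ContinuousAt (L ∘ invCayley w) (cayley w z) :=
    ((differentiableOn_comp_invCayley hL hw).differentiableAt
      (Metric.isOpen_ball.mem_nhds hzdisc)).continuousAt
  have hpoint : Tendsto (fun i => (r i : ℂ) * cayley w z) l (𝓝 (cayley w z)) := by
    simpa using ((continuous_ofReal.tendsto 1).comp hr).mul_const (cayley w z)
  simpa only [Function.comp_def, invCayley_cayley hw hz] using hcont.tendsto.comp hpoint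

theorem exists_mem_Icc_inner_eq_add_integral_nevanlinnaKernel_mul [SeparableSpace H]
    {L : ℂ → H →L[ℂ] H} (hL : DifferentiableOn ℂ L {z | 0 < z.im})
    (hL01 : ∀ z, 0 < z.im → (ℑ (L z) : H →L[ℂ] H) ∈ Set.Icc 0 1) :
    ∃ Ξ : ℝ → H →L[ℂ] H, (∀ l, Ξ l ∈ Set.Icc 0 1) ∧ (∀ g, StronglyMeasurable fun l => Ξ l g) ∧
      ∀ z, 0 < z.im → ∀ f g, ⟪f, L z g⟫_ℂ = ⟪f, (ℜ (L I) : H →L[ℂ] H) g⟫_ℂ +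
        ∫ l, nevanlinnaKernel z l * ⟪f, Ξ l g⟫_ℂ ∂cauchyMeasure 0 1 := by
  obtain ⟨r, -, hr, hrlim⟩ := exists_seq_strictMono_tendsto' (zero_lt_one (α := ℝ))
  let F : ℕ → ℂ → H →L[ℂ] H := fun n ω => L (invCayley I (r n * ω))
  have hLdisc := differentiableOn_comp_invCayley hL (w := I) (by simp)
  have hF (n : ℕ) : DiffContOnCl ℂ (F n) (Metric.ball 0 1) :=
    diffContOnCl_comp_ofReal_mul hLdisc (abs_lt.mpr ⟨by linarith [(hr n).1], (hr n).2⟩)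
  have hX01 (n : ℕ) (l : ℝ) : (ℑ (F n (cayley I l)) : H →L[ℂ] H) ∈ Set.Icc 0 1 := by
    refine hL01 _ (im_invCayley_pos (by simp) ?_)
    simpa [norm_cayley_I_ofReal, abs_of_pos (hr n).1] using (hr n).2
  have hXm (n : ℕ) : Continuous fun l : ℝ => (ℑ (F n (cayley I l)) : H →L[ℂ] H) :=
    continuous_imaginaryPart.comp <| (hF n).continuousOn_ball.comp_continuous
      continuous_cayley_I_ofReal fun l => by simp [norm_cayley_I_ofReal]
  let U : Ultrafilter ℕ := .of atTop
  obtain ⟨Ξ, hΞ, hΞm, hlim⟩ := exists_mem_Icc_tendsto_integral_inner_apply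
    (μ := cauchyMeasure 0 1) U (fun n => (hXm n).aestronglyMeasurable) hX01
  refine ⟨Ξ, hΞ, hΞm, fun z hz f g => ?_⟩
  have hkernel : MemLp (fun l => conj (nevanlinnaKernel z l) • f) 2 (cauchyMeasure 0 1) :=
    (toSpanSingleton ℂ f).comp_memLp' (memLp_nevanlinnaKernel hz.ne').star
  have hint := hlim g _ hkernel
  simp only [inner_smul_left, conj_conj] at hint
  have hLlim : Tendsto (fun n => ⟪f, F n (cayley I z) g⟫_ℂ) U (𝓝 ⟪f, L z g⟫_ℂ) := by
    have hFlim : Tendsto (fun n => F n (cayley I z)) U (𝓝 (L z)) :=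
      (tendsto_comp_invCayley_mul_cayley hL (by simp) hz hrlim).mono_left (Ultrafilter.of_le _)
    exact tendsto_const_nhds.inner <|
      ((ContinuousLinearMap.apply ℂ H g).continuous.tendsto _).comp hFlim
  refine tendsto_nhds_unique hLlim ?_
  have hF0 (n : ℕ) : F n 0 = L I := by simp [F, invCayley_zero]
  simpa only [inner_eq_inner_realPart_add_integral (hF _) hz, hF0] using hint.const_add _

theorem integrable_nevanlinnaKernel_mul_inner {Ξ : ℝ → H →L[ℂ] H} (hz : z.im ≠ 0)
    (hΞ : ∀ l, Ξ l ∈ Set.Icc 0 1) {g : H} (hΞm : StronglyMeasurable fun l => Ξ l g) (f : H) :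
    Integrable (fun l => nevanlinnaKernel z l * ⟪f, Ξ l g⟫_ℂ) (cauchyMeasure 0 1) := by
  refine ((memLp_nevanlinnaKernel hz).integrable le_rfl).mul_bdd (c := ‖f‖ * ‖g‖)
    (stronglyMeasurable_const.inner hΞm).aestronglyMeasurable (.of_forall fun l => ?_)
  grw [norm_inner_le_norm, (Ξ l).le_of_opNorm_le (norm_le_one_of_mem_Icc (hΞ l)) g, one_mul]

end Nevanlinna

theorem imaginaryPart_mem_Icc_zero_one_iff {T : H →L[ℂ] H} :
    (ℑ T : H →L[ℂ] H) ∈ Set.Icc 0 1 ↔ ∀ f, (⟪f, T f⟫_ℂ).im ∈ Set.Icc 0 (‖f‖ ^ 2) := by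
  have hone (f : H) : ⟪f, (1 - (ℑ T : H →L[ℂ] H)) f⟫_ℂ = (‖f‖ ^ 2 - (⟪f, T f⟫_ℂ).im : ℝ) := by
    rw [sub_apply, inner_sub_right, one_apply_eq_self, inner_imaginaryPart_self,
      inner_self_eq_norm_sq_to_K]
    push_cast
    rfl
  rw [Set.mem_Icc, ← sub_nonneg (b := (ℑ T : H →L[ℂ] H)), nonneg_iff_forall_inner_nonneg,
    nonneg_iff_forall_inner_nonneg, ← forall_and]
  simp only [hone, inner_imaginaryPart_self, Complex.zero_le_real, sub_nonneg, Set.mem_Icc]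

theorem IsDissipative.imaginaryPart_inv_pi_smul_opLog_mem_Icc {T : H →L[ℂ] H}
    (hT : IsDissipative T) (hu : IsUnit T) :
    (ℑ (Real.pi⁻¹ • opLog T) : H →L[ℂ] H) ∈ Set.Icc 0 1 := by
  refine imaginaryPart_mem_Icc_zero_one_iff.mpr fun f => ?_
  obtain ⟨hpos, hle⟩ := hT.im_inner_opLog_mem_Icc hu f
  rw [smul_apply, inner_smul_right_eq_smul, smul_im, smul_eq_mul]
  exact ⟨by positivity, (inv_mul_le_iff₀ Real.pi_pos).mpr hle⟩

theorem IsHerglotz.differentiableOn_opLog {M : ℂ → H →L[ℂ] H} (hM : IsHerglotz M)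
    (hu : ∀ z, 0 < z.im → IsUnit (M z)) :
    DifferentiableOn ℂ (fun z => opLog (M z)) {z | 0 < z.im} := fun z hz =>
  ((hM.isDissipative hz).hasFDerivWithinAt_opLog (hu z hz)).differentiableWithinAt.comp z
    (hM.1 z hz) fun ζ hζ => ⟨hM.isDissipative hζ, hu ζ hζ⟩

/-- Theorem 2.8 (first part): operator-valued exponential Herglotz representation
`log M(z) = C + ∫ Ξ(λ) ((λ-z)⁻¹ - λ(1+λ²)⁻¹) dλ` (weak sense) with a weakly measurable
family of self-adjoint operators `0 ≤ Ξ(λ) ≤ I` a.e. and `C = C*`. -/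
theorem opLog_herglotz_representation [SeparableSpace H]
    (M : ℂ → H →L[ℂ] H) (hM : IsHerglotz M)
    (z₀ : ℂ) (hz₀ : 0 < z₀.im) (hM₀ : IsUnit (M z₀)) :
    ∃ (Ξ : ℝ → H →L[ℂ] H) (C : H →L[ℂ] H),
      IsSelfAdjoint C ∧
      (∀ l : ℝ, IsSelfAdjoint (Ξ l)) ∧
      (∀ f g : H, Measurable fun l : ℝ => ⟪f, Ξ l g⟫_ℂ) ∧
      (∀ᵐ l ∂(volume : Measure ℝ),
        (Ξ l).IsPositive ∧ ((1 : H →L[ℂ] H) - Ξ l).IsPositive) ∧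
      ∀ z : ℂ, 0 < z.im → ∀ f g : H,
        Integrable (fun l : ℝ =>
          (((l : ℂ) - z)⁻¹ - (l : ℂ) * ((1 : ℂ) + (l : ℂ) ^ 2)⁻¹) * ⟪f, Ξ l g⟫_ℂ) ∧
        ⟪f, opLog (M z) g⟫_ℂ = ⟪f, C g⟫_ℂ +
          ∫ l : ℝ, (((l : ℂ) - z)⁻¹ - (l : ℂ) * ((1 : ℂ) + (l : ℂ) ^ 2)⁻¹) * ⟪f, Ξ l g⟫_ℂ := by
  have hu (z : ℂ) (hz : 0 < z.im) : IsUnit (M z) := hM.isUnit_of_isUnit hz₀ hz hM₀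
  obtain ⟨Ξ, hΞ, hΞm, hrep⟩ := exists_mem_Icc_inner_eq_add_integral_nevanlinnaKernel_mul
    ((hM.differentiableOn_opLog hu).const_smul Real.pi⁻¹)
    fun z hz => (hM.isDissipative hz).imaginaryPart_inv_pi_smul_opLog_mem_Icc (hu z hz)
  refine ⟨Ξ, ℜ (opLog (M I)), (ℜ (opLog (M I))).2, fun l => .of_nonneg (hΞ l).1,
    fun f g => (stronglyMeasurable_const.inner (hΞm g)).measurable, .of_forall fun l =>
    ⟨(nonneg_iff_isPositive _).mp (hΞ l).1, (nonneg_iff_isPositive _).mp (sub_nonneg.mpr (hΞ l).2)⟩,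
    fun z hz f g => ⟨(integrable_nevanlinnaKernel_mul_iff hz.ne').mp
      (integrable_nevanlinnaKernel_mul_inner hz.ne' hΞ (hΞm g) f), ?_⟩⟩
  have hscaled := congrArg ((Real.pi : ℂ) * ·) (hrep z hz f g)
  simpa [mul_add, pi_mul_integral_nevanlinnaKernel_mul hz.ne', inner_smul_right_eq_smul]
    using hscaled

end SpectralShift
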